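/- arXiv:2103.12611 — 5 statements merged into one kernel-verified Lean document; each statement's English description precedes it below -/
import Mathlib

section
/- Let ε₁, ε₂, a be complex numbers and set ε = ε₁ + ε₂. For every Young diagram λ the following identity holds in the field ℂ(x) of rational functions: (x − a)·∏_{□∈λ} [(x − a − c(□) − ε₁)(x − a − c(□) − ε₂)] / [(x − a − c(□))(x − a − c(□) − ε)] = ∏_{□∈∂₊λ} (x − a − c(□)) / ∏_{■∈∂₋λ} (x − a − ε − c(■)). -/
open scoped BigOperators

noncomputable section

/-- The set of growth boxes of a Young diagram `μ`. -/
def growthBoxes (μ : YoungDiagram) : Set (ℕ × ℕ) :=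
  {c | c ∉ μ ∧ IsLowerSet (insert c (μ.cells : Set (ℕ × ℕ)))}

/-- The set of corner boxes of a Young diagram `μ`. -/
def cornerBoxes (μ : YoungDiagram) : Set (ℕ × ℕ) :=
  {c | c ∈ μ ∧ IsLowerSet ((μ.cells : Set (ℕ × ℕ)) \ {c})}

/-- The content of a (0-based) box `(i, j)`, i.e. `(i−1)ε₁ + (j−1)ε₂` for the
corresponding 1-based box `(i+1, j+1)`. -/
def content (ε₁ ε₂ : ℂ) (c : ℕ × ℕ) : ℂ := (c.1 : ℂ) * ε₁ + (c.2 : ℂ) * ε₂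

theorem mem_growthBoxes_iff (μ : YoungDiagram) (i j : ℕ) :
    (i, j) ∈ growthBoxes μ ↔
      (i, j) ∉ μ ∧ (∀ k, i = k + 1 → (k, j) ∈ μ) ∧ (∀ k, j = k + 1 → (i, k) ∈ μ) := by
  unfold growthBoxes
  constructor
  · rintro ⟨h, hl⟩
    refine ⟨h, ?_, ?_⟩
    · rintro k rfl
      have := hl (a := (k + 1, j)) (b := (k, j)) (by simp) (by simp)
      simpa using this
    · rintro k rfl
      have := hl (a := (i, k + 1)) (b := (i, k)) (by simp) (by simp)
      simpa using this
  · rintro ⟨h, h1, h2⟩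
    refine ⟨h, ?_⟩
    rintro ⟨p, q⟩ ⟨r, t⟩ hle hm
    obtain ⟨hr, ht⟩ := Prod.mk_le_mk.1 hle
    simp only [Set.mem_insert_iff, Prod.mk.injEq, Finset.mem_coe, YoungDiagram.mem_cells] at hm ⊢
    rcases hm with ⟨rfl, rfl⟩ | hm
    · by_cases hrp : r = p
      · by_cases htq : t = q
        · exact Or.inl ⟨hrp, htq⟩
        · exact Or.inr (μ.up_left_mem hr (by omega) (h2 (q - 1) (by omega)))
      · exact Or.inr (μ.up_left_mem (by omega) ht (h1 (p - 1) (by omega)))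
    · exact Or.inr (μ.up_left_mem hr ht hm)

theorem mem_cornerBoxes_iff (μ : YoungDiagram) (i j : ℕ) :
    (i, j) ∈ cornerBoxes μ ↔ (i, j) ∈ μ ∧ (i + 1, j) ∉ μ ∧ (i, j + 1) ∉ μ := by
  unfold cornerBoxes
  constructor
  · rintro ⟨h, hl⟩
    refine ⟨h, fun h1 => ?_, fun h1 => ?_⟩
    · have := hl (a := (i + 1, j)) (b := (i, j)) (by simp) (by simpa using h1)
      simp at this
    · have := hl (a := (i, j + 1)) (b := (i, j)) (by simp) (by simpa using h1)
      simp at this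
  · rintro ⟨h, h1, h2⟩
    refine ⟨h, ?_⟩
    rintro ⟨p, q⟩ ⟨r, t⟩ hle hm
    obtain ⟨hr, ht⟩ := Prod.mk_le_mk.1 hle
    simp only [Set.mem_sdiff, Set.mem_singleton_iff, Prod.mk.injEq, Finset.mem_coe,
      YoungDiagram.mem_cells] at hm ⊢
    refine ⟨μ.up_left_mem hr ht hm.1, ?_⟩
    rintro ⟨rfl, rfl⟩
    by_cases hrp : r = p
    · exact h2 (μ.up_left_mem hr (by omega) hm.1)
    · exact h1 (μ.up_left_mem (by omega) ht hm.1)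

def shA : ℕ × ℕ ↪ ℕ × ℕ := ⟨fun c => (c.1 + 1, c.2), fun a b h => by
  simp only [Prod.mk.injEq] at h; ext <;> omega⟩
def shB : ℕ × ℕ ↪ ℕ × ℕ := ⟨fun c => (c.1, c.2 + 1), fun a b h => by
  simp only [Prod.mk.injEq] at h; ext <;> omega⟩
def shC : ℕ × ℕ ↪ ℕ × ℕ := ⟨fun c => (c.1 + 1, c.2 + 1), fun a b h => by
  simp only [Prod.mk.injEq] at h; ext <;> omega⟩

theorem shA_apply (c : ℕ × ℕ) : shA c = (c.1 + 1, c.2) := rfl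
theorem shB_apply (c : ℕ × ℕ) : shB c = (c.1, c.2 + 1) := rfl
theorem shC_apply (c : ℕ × ℕ) : shC c = (c.1 + 1, c.2 + 1) := rfl

theorem mem_shA (s : Finset (ℕ × ℕ)) (i j : ℕ) :
    (i, j) ∈ s.map shA ↔ ∃ k, i = k + 1 ∧ (k, j) ∈ s := by
  simp only [Finset.mem_map, shA_apply, Prod.mk.injEq, Prod.exists]
  constructor
  · rintro ⟨p, q, h, rfl, rfl⟩; exact ⟨p, rfl, h⟩
  · rintro ⟨k, rfl, h⟩; exact ⟨k, j, h, rfl, rfl⟩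

theorem mem_shB (s : Finset (ℕ × ℕ)) (i j : ℕ) :
    (i, j) ∈ s.map shB ↔ ∃ k, j = k + 1 ∧ (i, k) ∈ s := by
  simp only [Finset.mem_map, shB_apply, Prod.mk.injEq, Prod.exists]
  constructor
  · rintro ⟨p, q, h, rfl, rfl⟩; exact ⟨q, rfl, h⟩
  · rintro ⟨k, rfl, h⟩; exact ⟨i, k, h, rfl, rfl⟩

theorem mem_shC (s : Finset (ℕ × ℕ)) (i j : ℕ) :
    (i, j) ∈ s.map shC ↔ ∃ k l, i = k + 1 ∧ j = l + 1 ∧ (k, l) ∈ s := by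
  simp only [Finset.mem_map, shC_apply, Prod.mk.injEq, Prod.exists]
  constructor
  · rintro ⟨p, q, h, rfl, rfl⟩; exact ⟨p, q, rfl, rfl, h⟩
  · rintro ⟨k, l, rfl, rfl, h⟩; exact ⟨k, l, h, rfl, rfl⟩

theorem boxes_multiset (μ : YoungDiagram) (G D : Finset (ℕ × ℕ))
    (hG : ∀ c, c ∈ G ↔ c ∈ growthBoxes μ) (hD : ∀ c, c ∈ D ↔ c ∈ cornerBoxes μ) :
    ({(0, 0)} : Finset (ℕ × ℕ)).val + (μ.cells.map shA).val + (μ.cells.map shB).val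
      + (D.map shC).val = G.val + μ.cells.val + (μ.cells.map shC).val := by
  classical
  ext ⟨i, j⟩
  simp only [Multiset.count_add, Multiset.count_eq_of_nodup (Finset.nodup _), Finset.mem_val,
    mem_shA, mem_shB, mem_shC, hG, hD, mem_growthBoxes_iff, mem_cornerBoxes_iff,
    YoungDiagram.mem_cells, Finset.mem_singleton, Prod.mk.injEq]
  have key : ∀ p q r t, p ≤ r → q ≤ t → (r, t) ∈ μ → (p, q) ∈ μ :=
    fun p q r t h1 h2 h => μ.up_left_mem h1 h2 h
  rcases i with _ | i <;> rcases j with _ | j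
  · by_cases h : (0, 0) ∈ μ <;> simp [h]
  · have h1 := key 0 j 0 (j + 1) (by omega) (by omega)
    by_cases h : (0, j + 1) ∈ μ <;> by_cases h' : (0, j) ∈ μ <;> simp_all
  · have h1 := key i 0 (i + 1) 0 (by omega) (by omega)
    by_cases h : (i + 1, 0) ∈ μ <;> by_cases h' : (i, 0) ∈ μ <;> simp_all
  · have h1 := key i (j + 1) (i + 1) (j + 1) (by omega) (by omega)
    have h2 := key (i + 1) j (i + 1) (j + 1) (by omega) (by omega)
    have h3 := key i j i (j + 1) (by omega) (by omega)
    have h4 := key i j (i + 1) j (by omega) (by omega)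
    clear key hG hD
    by_cases a1 : (i + 1, j + 1) ∈ μ <;> by_cases a2 : (i, j + 1) ∈ μ <;>
      by_cases a3 : (i + 1, j) ∈ μ <;> by_cases a4 : (i, j) ∈ μ <;> simp_all

theorem growth_finite (μ : YoungDiagram) : (growthBoxes μ).Finite := by
  refine ((({(0, 0)} : Finset (ℕ × ℕ)) ∪ μ.cells.map shA ∪ μ.cells.map shB).finite_toSet).subset ?_
  rintro ⟨i, j⟩ h
  rw [mem_growthBoxes_iff] at h
  simp only [Finset.coe_union, Set.mem_union, Finset.mem_coe, mem_shA, mem_shB,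
    Finset.mem_singleton, Prod.mk.injEq, YoungDiagram.mem_cells]
  rcases i with _ | i
  · rcases j with _ | j
    · simp
    · exact Or.inr ⟨j, rfl, h.2.2 j rfl⟩
  · exact Or.inl (Or.inr ⟨i, rfl, h.2.1 i rfl⟩)

theorem corner_finite (μ : YoungDiagram) : (cornerBoxes μ).Finite :=
  μ.cells.finite_toSet.subset fun _ h => h.1

theorem boxes_prod {K : Type*} [Field K] (f : ℕ × ℕ → K) (hf : ∀ c, f c ≠ 0) (μ : YoungDiagram) :
    f (0, 0) * ∏ c ∈ μ.cells, (f (shA c) * f (shB c) / (f c * f (shC c))) =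
      (∏ᶠ c ∈ growthBoxes μ, f c) / (∏ᶠ c ∈ cornerBoxes μ, f (shC c)) := by
  classical
  rw [finprod_mem_eq_finite_toFinset_prod _ (growth_finite μ),
    finprod_mem_eq_finite_toFinset_prod _ (corner_finite μ)]
  have h := boxes_multiset μ (growth_finite μ).toFinset (corner_finite μ).toFinset
    (by simp) (by simp)
  have h2 := congrArg (fun s => (Multiset.map f s).prod) h
  simp only [Multiset.map_add, Multiset.prod_add, Finset.prod_map_val, Finset.prod_map,
    Finset.prod_singleton] at h2
  rw [Finset.prod_div_distrib, Finset.prod_mul_distrib, Finset.prod_mul_distrib, ← mul_div_assoc,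
    div_eq_div_iff]
  · linear_combination h2
  · exact mul_ne_zero (Finset.prod_ne_zero_iff.2 fun _ _ => hf _)
      (Finset.prod_ne_zero_iff.2 fun _ _ => hf _)
  · exact Finset.prod_ne_zero_iff.2 fun _ _ => hf _

theorem X_sub_C_ne (b : ℂ) : (RatFunc.X - RatFunc.C b : RatFunc ℂ) ≠ 0 := by
  rw [← RatFunc.algebraMap_X, ← RatFunc.algebraMap_C, ← map_sub]
  exact RatFunc.algebraMap_ne_zero (Polynomial.X_sub_C_ne_zero b)

/-- The two expressions for the Y-observable `Y(x)|_λ` agree in `ℂ(x)`: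
`(x − a)·∏_{□∈λ} (x−a−c(□)−ε₁)(x−a−c(□)−ε₂)/[(x−a−c(□))(x−a−c(□)−ε)]
  = ∏_{□∈∂₊λ}(x−a−c(□)) / ∏_{■∈∂₋λ}(x−a−ε−c(■))` with `ε = ε₁+ε₂`. -/
theorem Yobservable_eq_growth_corner (ε₁ ε₂ a : ℂ) (μ : YoungDiagram) :
    (RatFunc.X - RatFunc.C a) *
      ∏ c ∈ μ.cells,
        ((RatFunc.X - RatFunc.C (a + content ε₁ ε₂ c + ε₁)) *
            (RatFunc.X - RatFunc.C (a + content ε₁ ε₂ c + ε₂)) /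
          ((RatFunc.X - RatFunc.C (a + content ε₁ ε₂ c)) *
            (RatFunc.X - RatFunc.C (a + content ε₁ ε₂ c + (ε₁ + ε₂))))) =
      (∏ᶠ c ∈ growthBoxes μ, (RatFunc.X - RatFunc.C (a + content ε₁ ε₂ c))) /
        (∏ᶠ c ∈ cornerBoxes μ, (RatFunc.X - RatFunc.C (a + (ε₁ + ε₂) + content ε₁ ε₂ c))) := by
  have h := boxes_prod (fun c => (RatFunc.X - RatFunc.C (a + content ε₁ ε₂ c) : RatFunc ℂ))
    (fun c => X_sub_C_ne _) μ
  have e0 : a + content ε₁ ε₂ (0, 0) = a := by simp [content]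
  have eA : ∀ c, a + content ε₁ ε₂ (shA c) = a + content ε₁ ε₂ c + ε₁ := fun c => by
    simp only [content, shA_apply]; push_cast; ring
  have eB : ∀ c, a + content ε₁ ε₂ (shB c) = a + content ε₁ ε₂ c + ε₂ := fun c => by
    simp only [content, shB_apply]; push_cast; ring
  have eC : ∀ c, a + content ε₁ ε₂ (shC c) = a + content ε₁ ε₂ c + (ε₁ + ε₂) := fun c => by
    simp only [content, shC_apply]; push_cast; ring
  simp only [e0, eA, eB, eC] at h
  rw [h]
  simp only [add_right_comm a (ε₁ + ε₂)]
end
end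

section
/- Fix N ≥ 1, complex numbers ε₁, ε₂, a₁,…,a_N, set ε = ε₁+ε₂, and let λ̄ = (λ^{(1)},…,λ^{(N)}) be an N-tuple of Young diagrams. In the group algebra ℤ[ℂ] of the additive group (ℂ,+), with basis elements e^w for w ∈ ℂ, let T(λ̄) = Σ_{b,c=1}^N e^{a_b − a_c}·( χ*_{λ^{(c)}} + e^ε·χ_{λ^{(b)}} − (1 − e^{ε₁})(1 − e^{ε₂})·χ_{λ^{(b)}}·χ*_{λ^{(c)}} ). Then e^ε·ι(T(λ̄)) = T(λ̄), where ι is the algebra involution of ℤ[ℂ] induced by the group automorphism w ↦ −w. Equivalently, the multiset of tangent weights {w_t} determined by Σ_t e^{w_t} = T(λ̄) coincides with the multiset {ε − w_t}. -/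
open scoped BigOperators

noncomputable section

/-- The group algebra `ℤ[ℂ]` of the additive group `(ℂ, +)`. -/
abbrev GroupAlgCX : Type := AddMonoidAlgebra ℤ ℂ

/-- The basis element `e^w` of `ℤ[ℂ]`. -/
def eExp (w : ℂ) : GroupAlgCX := AddMonoidAlgebra.single w 1

/-- `χ_λ = Σ_{□∈λ} e^{c(□)}`. -/
def chi (ε₁ ε₂ : ℂ) (μ : YoungDiagram) : GroupAlgCX :=
  ∑ c ∈ μ.cells, eExp (content ε₁ ε₂ c)

/-- `χ*_λ = Σ_{□∈λ} e^{−c(□)}`. -/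
def chiStar (ε₁ ε₂ : ℂ) (μ : YoungDiagram) : GroupAlgCX :=
  ∑ c ∈ μ.cells, eExp (-(content ε₁ ε₂ c))

/-- The tangent character
`T(λ̄) = Σ_{b,c} e^{a_b − a_c}·(χ*_{λ^{(c)}} + e^ε·χ_{λ^{(b)}}
  − (1 − e^{ε₁})(1 − e^{ε₂})·χ_{λ^{(b)}}·χ*_{λ^{(c)}})`. -/
def tangentChar (N : ℕ) (ε₁ ε₂ : ℂ) (a : Fin N → ℂ)
    (lam : Fin N → YoungDiagram) : GroupAlgCX :=
  ∑ b : Fin N, ∑ c : Fin N,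
    eExp (a b - a c) *
      (chiStar ε₁ ε₂ (lam c) + eExp (ε₁ + ε₂) * chi ε₁ ε₂ (lam b) -
        (1 - eExp ε₁) * (1 - eExp ε₂) * chi ε₁ ε₂ (lam b) * chiStar ε₁ ε₂ (lam c))

/-- The algebra involution `ι` of `ℤ[ℂ]` induced by the group automorphism `w ↦ −w`. -/
def iotaInv : GroupAlgCX ≃ₐ[ℤ] GroupAlgCX :=
  AddMonoidAlgebra.domCongr ℤ ℤ (AddEquiv.neg ℂ)

lemma eExp_add (x y : ℂ) : eExp (x + y) = eExp x * eExp y := by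
  simp [eExp, AddMonoidAlgebra.single_mul_single]

lemma eExp_zero : eExp 0 = 1 := rfl

lemma eExp_mul_neg (x : ℂ) : eExp x * eExp (-x) = 1 := by
  rw [← eExp_add, add_neg_cancel, eExp_zero]

lemma iotaInv_eExp (w : ℂ) : iotaInv (eExp w) = eExp (-w) := by
  simp [iotaInv, eExp]

lemma iotaInv_chi (ε₁ ε₂ : ℂ) (μ : YoungDiagram) :
    iotaInv (chi ε₁ ε₂ μ) = chiStar ε₁ ε₂ μ := by
  simp only [chi, chiStar, map_sum, iotaInv_eExp]

lemma iotaInv_chiStar (ε₁ ε₂ : ℂ) (μ : YoungDiagram) :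
    iotaInv (chiStar ε₁ ε₂ μ) = chi ε₁ ε₂ μ := by
  simp only [chi, chiStar, map_sum, iotaInv_eExp, neg_neg]

/-- The duality of tangent weights: `e^ε · ι(T(λ̄)) = T(λ̄)`, i.e. the multiset of
tangent weights `{w_t}` coincides with the multiset `{ε − w_t}`. -/
theorem tangentChar_duality (N : ℕ) (hN : 1 ≤ N) (ε₁ ε₂ : ℂ) (a : Fin N → ℂ)
    (lam : Fin N → YoungDiagram) :
    eExp (ε₁ + ε₂) * iotaInv (tangentChar N ε₁ ε₂ a lam) = tangentChar N ε₁ ε₂ a lam := by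
  simp only [tangentChar, map_sum, Finset.mul_sum]
  rw [Finset.sum_comm]
  refine Finset.sum_congr rfl fun b _ => Finset.sum_congr rfl fun c _ => ?_
  simp only [map_mul, map_add, map_sub, map_one, iotaInv_eExp, iotaInv_chi, iotaInv_chiStar,
    neg_sub, neg_add, eExp_add]
  have h1 := eExp_mul_neg ε₁
  have h2 := eExp_mul_neg ε₂
  generalize eExp (-ε₁) = x' at *
  generalize eExp (-ε₂) = y' at *
  generalize eExp ε₁ = x at *
  generalize eExp ε₂ = y at *
  generalize eExp (a b - a c) = e
  generalize chi ε₁ ε₂ (lam b) = p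
  generalize chiStar ε₁ ε₂ (lam c) = q
  have h3 : x * y * (x' * y') = 1 := by
    rw [mul_mul_mul_comm, h1, h2, one_mul]
  have h4 : x * y * ((1 - x') * (1 - y')) = (1 - x) * (1 - y) := by
    rw [mul_mul_mul_comm, mul_sub, mul_sub, h1, h2]; ring
  linear_combination e * q * h3 - e * p * q * h4
end
end

section
/- In the regular ℤ/N-colored setup with generic parameters, for every color ω ∈ ℤ/N and every function k̄: ℤ/N → ℤ_{≥0}, the rational function Σ_{λ̄ : k_•(λ̄) = k̄} μ̂^{orb}(λ̄)·Y_{ω+1}(x+ε̃)|_{λ̄} + Σ_{λ̄ : k_•(λ̄) = k̄−δ_ω} μ̂^{orb}(λ̄)·P_ω(x)/Y_ω(x)|_{λ̄} is a polynomial in x (where k̄−δ_ω lowers the value of k̄ at ω by one, and the second sum is empty if k̄(ω)=0). Equivalently, the average of the fractional qq-character 𝒳_ω(x) = Y_{ω+1}(x+ε̃) + 𝔮_ω·P_ω(x)/Y_ω(x) against the orbifold pseudo-measure is, coefficientwise in the fractional couplings 𝔮₀,…,𝔮_{N−1}, a regular function of x. -/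
open scoped BigOperators

noncomputable section

/-- The content `c̃(i, j) = (i−1)ε₁ + (j−1)ε̃₂` of a box, in 0-based coordinates. -/
def ctil (ε₁ ε₂t : ℂ) (c : ℕ × ℕ) : ℂ := (c.1 : ℂ) * ε₁ + (c.2 : ℂ) * ε₂t

/-- The instanton charge `k_ω(λ̄)`: the number of boxes of `λ̄` of color `ω`,
where a (0-based) box `(i, j)` of `λ^{(ω′)}` has color `ω′ + j`. -/
def kcharge (N : ℕ) [NeZero N] (lam : ZMod N → YoungDiagram) (ω : ZMod N) : ℕ :=
  ∑ ω' : ZMod N, ((lam ω').cells.filter fun c => ω' + (c.2 : ZMod N) = ω).card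

/-- The colored Y-observable `Y_ω(x + s)|_λ̄ ∈ ℂ(x)` (the variable is shifted by `s`). -/
def Ycol (N : ℕ) [NeZero N] (ε₁ ε₂t : ℂ) (aT : ZMod N → ℂ) (ω : ZMod N) (s : ℂ)
    (lam : ZMod N → YoungDiagram) : RatFunc ℂ :=
  (RatFunc.X + RatFunc.C s - RatFunc.C (aT ω)) *
    ∏ ω' : ZMod N, ∏ c ∈ (lam ω').cells,
      ((if ω' + (c.2 : ZMod N) = ω then
          (RatFunc.X + RatFunc.C s - RatFunc.C (aT ω' + ctil ε₁ ε₂t c + ε₁)) /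
            (RatFunc.X + RatFunc.C s - RatFunc.C (aT ω' + ctil ε₁ ε₂t c))
        else 1) *
       (if ω' + (c.2 : ZMod N) = ω - 1 then
          (RatFunc.X + RatFunc.C s - RatFunc.C (aT ω' + ctil ε₁ ε₂t c + ε₂t)) /
            (RatFunc.X + RatFunc.C s - RatFunc.C (aT ω' + ctil ε₁ ε₂t c + ε₁ + ε₂t))
        else 1))

/-- The basis element `e^{(w, σ)}` of the group algebra `ℤ[ℂ × ℤ/N]`. -/
def e2 (N : ℕ) (w : ℂ × ZMod N) : AddMonoidAlgebra ℤ (ℂ × ZMod N) :=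
  AddMonoidAlgebra.single w 1

/-- `χ̃_λ = Σ_{(i,j)∈λ} e^{(c̃(i,j), j−1)}` (0-based boxes). -/
def chiT (N : ℕ) (ε₁ ε₂t : ℂ) (μ : YoungDiagram) : AddMonoidAlgebra ℤ (ℂ × ZMod N) :=
  ∑ c ∈ μ.cells, e2 N (ctil ε₁ ε₂t c, (c.2 : ZMod N))

/-- `χ̃*_λ = Σ_{(i,j)∈λ} e^{(−c̃(i,j), 1−j)}` (0-based boxes). -/
def chiTstar (N : ℕ) (ε₁ ε₂t : ℂ) (μ : YoungDiagram) : AddMonoidAlgebra ℤ (ℂ × ZMod N) :=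
  ∑ c ∈ μ.cells, e2 N (-(ctil ε₁ ε₂t c), -(c.2 : ZMod N))

/-- The colored tangent character of `λ̄` in the group algebra of `ℂ × ℤ/N`. -/
def colChar (N : ℕ) [NeZero N] (ε₁ ε₂t : ℂ) (aT : ZMod N → ℂ)
    (lam : ZMod N → YoungDiagram) : AddMonoidAlgebra ℤ (ℂ × ZMod N) :=
  ∑ ω' : ZMod N, ∑ ω'' : ZMod N,
    e2 N (aT ω' - aT ω'', ω' - ω'') *
      (chiTstar N ε₁ ε₂t (lam ω'') + e2 N (ε₁ + ε₂t, 1) * chiT N ε₁ ε₂t (lam ω') -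
        (1 - e2 N (ε₁, 0)) * (1 - e2 N (ε₂t, 1)) *
          chiT N ε₁ ε₂t (lam ω') * chiTstar N ε₁ ε₂t (lam ω''))

/-- The orbifold pseudo-measure weight `μ̂^{orb}(λ̄)`, where `T λ̄` is the multiset of
colored tangent weights and the denominator is the product of the weights of color `0`. -/
def muOrb (N : ℕ) [NeZero N] (ε₁ ε₂t : ℂ) (aT mp mm : ZMod N → ℂ)
    (T : (ZMod N → YoungDiagram) → Multiset (ℂ × ZMod N))
    (lam : ZMod N → YoungDiagram) : ℂ :=
  (∏ ω' : ZMod N, ∏ c ∈ (lam ω').cells,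
      ((aT ω' + ctil ε₁ ε₂t c - mp (ω' + (c.2 : ZMod N))) *
        (mm (ω' + (c.2 : ZMod N)) - aT ω' - ctil ε₁ ε₂t c))) /
    (((T lam).filter fun p => p.2 = 0).map Prod.fst).prod


/-- addable cells -/
def addb (μ : YoungDiagram) : Finset (ℕ × ℕ) :=
  (insert (0, 0) (μ.cells.image (fun c => (c.1 + 1, c.2)) ∪
    μ.cells.image (fun c => (c.1, c.2 + 1)))).filter fun c =>
      c ∉ μ ∧ (c.1 = 0 ∨ (c.1 - 1, c.2) ∈ μ) ∧ (c.2 = 0 ∨ (c.1, c.2 - 1) ∈ μ)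

/-- removable cells -/
def remb (μ : YoungDiagram) : Finset (ℕ × ℕ) :=
  μ.cells.filter fun c => (c.1 + 1, c.2) ∉ μ ∧ (c.1, c.2 + 1) ∉ μ

lemma mem_remb (μ : YoungDiagram) (c : ℕ × ℕ) :
    c ∈ remb μ ↔ c ∈ μ ∧ (c.1 + 1, c.2) ∉ μ ∧ (c.1, c.2 + 1) ∉ μ := by
  simp [remb]

lemma mem_addb (μ : YoungDiagram) (c : ℕ × ℕ) :
    c ∈ addb μ ↔ c ∉ μ ∧ (c.1 = 0 ∨ (c.1 - 1, c.2) ∈ μ) ∧ (c.2 = 0 ∨ (c.1, c.2 - 1) ∈ μ) := by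
  obtain ⟨i, j⟩ := c
  simp only [addb, Finset.mem_filter, Finset.mem_insert, Finset.mem_union, Finset.mem_image,
    YoungDiagram.mem_cells, Prod.mk.injEq]
  constructor
  · exact fun h => h.2
  · intro h
    refine ⟨?_, h⟩
    obtain ⟨h1, h2, h3⟩ := h
    rcases i with _ | i
    · rcases j with _ | j
      · simp
      · right; right
        exact ⟨(0, j), by simpa using h3, by simp⟩
    · right; left
      exact ⟨(i, j), by simpa using h2, by simp⟩

lemma yd_count_map (s : Finset (ℕ × ℕ)) (f : ℕ × ℕ → ℕ × ℕ) (hf : Function.Injective f)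
    (x : ℕ × ℕ) : Multiset.count x (s.val.map f) = if x ∈ s.image f then 1 else 0 := by
  classical
  have : s.val.map f = (s.image f).val := by
    rw [Finset.image_val, Multiset.dedup_eq_self.2]
    exact s.nodup.map hf
  rw [this, Multiset.count_eq_of_nodup (Finset.nodup _)]
  rfl

lemma yd_lower (μ : YoungDiagram) {i j i' j' : ℕ} (h : (i, j) ∈ μ) (hi : i' ≤ i) (hj : j' ≤ j) :
    (i', j') ∈ μ := μ.up_left_mem hi hj h

lemma corner_multiset (μ : YoungDiagram) :
    ({(0, 0)} : Multiset (ℕ × ℕ)) + μ.cells.val.map (fun c => (c.1 + 1, c.2))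
      + μ.cells.val.map (fun c => (c.1, c.2 + 1))
      + (remb μ).val.map (fun c => (c.1 + 1, c.2 + 1)) =
    μ.cells.val.map (fun c => c) + μ.cells.val.map (fun c => (c.1 + 1, c.2 + 1))
      + (addb μ).val.map (fun c => c) := by
  classical
  have i1 : Function.Injective (fun c : ℕ × ℕ => (c.1 + 1, c.2)) := by
    rintro ⟨a, b⟩ ⟨c, d⟩ h; simpa using h
  have i2 : Function.Injective (fun c : ℕ × ℕ => (c.1, c.2 + 1)) := by
    rintro ⟨a, b⟩ ⟨c, d⟩ h; simpa using h
  have i3 : Function.Injective (fun c : ℕ × ℕ => (c.1 + 1, c.2 + 1)) := by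
    rintro ⟨a, b⟩ ⟨c, d⟩ h; simpa using h
  have i4 : Function.Injective (fun c : ℕ × ℕ => c) := fun _ _ h => h
  ext ⟨i, j⟩
  simp only [Multiset.count_add]
  rw [yd_count_map _ _ i1, yd_count_map _ _ i2, yd_count_map _ _ i3, yd_count_map _ _ i3,
    yd_count_map _ _ i4, yd_count_map _ _ i4, Multiset.count_singleton]
  simp only [Finset.mem_image, Prod.exists, Prod.mk.injEq, mem_remb, mem_addb,
    YoungDiagram.mem_cells]
  rcases i with _ | i <;> rcases j with _ | j
  · simp; split_ifs <;> simp
  · have h1 : (0, j + 1) ∈ μ → (0, j) ∈ μ := fun h => yd_lower μ h le_rfl (by omega)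
    simp
    by_cases a : (0, j + 1) ∈ μ <;> by_cases b : (0, j) ∈ μ <;> simp_all
  · have h1 : (i + 1, 0) ∈ μ → (i, 0) ∈ μ := fun h => yd_lower μ h (by omega) le_rfl
    simp
    by_cases a : (i + 1, 0) ∈ μ <;> by_cases b : (i, 0) ∈ μ <;> simp_all
  · have h1 : (i + 1, j + 1) ∈ μ → (i, j + 1) ∈ μ := fun h => yd_lower μ h (by omega) le_rfl
    have h2 : (i + 1, j + 1) ∈ μ → (i + 1, j) ∈ μ := fun h => yd_lower μ h le_rfl (by omega)
    have h3 : (i, j + 1) ∈ μ → (i, j) ∈ μ := fun h => yd_lower μ h le_rfl (by omega)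
    have h4 : (i + 1, j) ∈ μ → (i, j) ∈ μ := fun h => yd_lower μ h (by omega) le_rfl
    simp
    by_cases a : (i + 1, j + 1) ∈ μ <;> by_cases b : (i + 1, j) ∈ μ <;>
      by_cases c : (i, j + 1) ∈ μ <;> by_cases d : (i, j) ∈ μ <;> simp_all

lemma corner_prod {M : Type*} [CommMonoid M] (μ : YoungDiagram) (g : ℕ × ℕ → M) :
    g (0, 0) * (∏ c ∈ μ.cells, g (c.1 + 1, c.2)) * (∏ c ∈ μ.cells, g (c.1, c.2 + 1)) *
      (∏ c ∈ remb μ, g (c.1 + 1, c.2 + 1)) =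
    (∏ c ∈ μ.cells, g c) * (∏ c ∈ μ.cells, g (c.1 + 1, c.2 + 1)) * ∏ c ∈ addb μ, g c := by
  have := congrArg (fun m => (m.map g).prod) (corner_multiset μ)
  simp only [Multiset.map_add, Multiset.map_singleton, Multiset.map_map, Multiset.prod_add,
    Multiset.prod_singleton] at this
  exact this

/-- the type of boxes -/
abbrev Bx (N : ℕ) := (_ : ZMod N) × (ℕ × ℕ)

section QQ

variable {N : ℕ} [NeZero N]

def bx (lam : ZMod N → YoungDiagram) : Finset (Bx N) := Finset.univ.sigma fun σ => (lam σ).cells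
def ab (lam : ZMod N → YoungDiagram) : Finset (Bx N) := Finset.univ.sigma fun σ => addb (lam σ)
def rb (lam : ZMod N → YoungDiagram) : Finset (Bx N) := Finset.univ.sigma fun σ => remb (lam σ)

lemma mem_bx (lam : ZMod N → YoungDiagram) (b : Bx N) : b ∈ bx lam ↔ b.2 ∈ lam b.1 := by
  simp [bx]
lemma mem_ab (lam : ZMod N → YoungDiagram) (b : Bx N) : b ∈ ab lam ↔ b.2 ∈ addb (lam b.1) := by
  simp [ab]
lemma mem_rb (lam : ZMod N → YoungDiagram) (b : Bx N) : b ∈ rb lam ↔ b.2 ∈ remb (lam b.1) := by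
  simp [rb]

lemma bx_inj : Function.Injective (bx : (ZMod N → YoungDiagram) → Finset (Bx N)) := by
  intro l l' h
  funext σ
  apply YoungDiagram.ext
  ext c
  have := Finset.ext_iff.1 h ⟨σ, c⟩
  simpa [mem_bx] using this

/-- color of a box -/
def colb (b : Bx N) : ZMod N := b.1 + (b.2.2 : ZMod N)
/-- content of a box -/
def conb (ε₁ ε₂t : ℂ) (aT : ZMod N → ℂ) (b : Bx N) : ℂ := aT b.1 + ctil ε₁ ε₂t b.2

lemma corner_prod_all {M : Type*} [CommMonoid M] (ε₁ ε₂t : ℂ) (aT : ZMod N → ℂ)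
    (lam : ZMod N → YoungDiagram) (g : ℂ → ZMod N → M) :
    (∏ σ, g (aT σ) σ) * (∏ b ∈ bx lam, g (conb ε₁ ε₂t aT b + ε₁) (colb b)) *
      (∏ b ∈ bx lam, g (conb ε₁ ε₂t aT b + ε₂t) (colb b + 1)) *
      (∏ b ∈ rb lam, g (conb ε₁ ε₂t aT b + (ε₁ + ε₂t)) (colb b + 1)) =
    (∏ b ∈ bx lam, g (conb ε₁ ε₂t aT b) (colb b)) *
      (∏ b ∈ bx lam, g (conb ε₁ ε₂t aT b + (ε₁ + ε₂t)) (colb b + 1)) *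
      (∏ b ∈ ab lam, g (conb ε₁ ε₂t aT b) (colb b)) := by
  simp only [bx, ab, rb, Finset.prod_sigma, ← Finset.prod_mul_distrib]
  refine Finset.prod_congr rfl fun σ _ => ?_
  have := corner_prod (lam σ) (fun c => g (aT σ + ctil ε₁ ε₂t c) (σ + (c.2 : ZMod N)))
  simp only [ctil, Nat.cast_zero, zero_mul, add_zero, Nat.cast_add, Nat.cast_one] at this
  simp only [conb, colb, ctil]
  have h1 : ∀ u v : ℂ, aT σ + (u * ε₁ + v * ε₂t) + ε₁ = aT σ + ((u + 1) * ε₁ + v * ε₂t) := by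
    intros; ring
  have h2 : ∀ u v : ℂ, aT σ + (u * ε₁ + v * ε₂t) + ε₂t = aT σ + (u * ε₁ + (v + 1) * ε₂t) := by
    intros; ring
  have h3 : ∀ u v : ℂ, aT σ + (u * ε₁ + v * ε₂t) + (ε₁ + ε₂t) =
      aT σ + ((u + 1) * ε₁ + (v + 1) * ε₂t) := by
    intros; ring
  simp only [Finset.prod_mul_distrib, h1, h2, h3, add_assoc σ]
  exact this

lemma corner_sum_all {M : Type*} [AddCommMonoid M] (ε₁ ε₂t : ℂ) (aT : ZMod N → ℂ)
    (lam : ZMod N → YoungDiagram) (g : ℂ → ZMod N → M) :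
    (∑ σ, g (aT σ) σ) + (∑ b ∈ bx lam, g (conb ε₁ ε₂t aT b + ε₁) (colb b)) +
      (∑ b ∈ bx lam, g (conb ε₁ ε₂t aT b + ε₂t) (colb b + 1)) +
      (∑ b ∈ rb lam, g (conb ε₁ ε₂t aT b + (ε₁ + ε₂t)) (colb b + 1)) =
    (∑ b ∈ bx lam, g (conb ε₁ ε₂t aT b) (colb b)) +
      (∑ b ∈ bx lam, g (conb ε₁ ε₂t aT b + (ε₁ + ε₂t)) (colb b + 1)) +
      (∑ b ∈ ab lam, g (conb ε₁ ε₂t aT b) (colb b)) :=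
  corner_prod_all (M := Multiplicative M) ε₁ ε₂t aT lam g

/-! adding and removing boxes -/

def addCell (μ : YoungDiagram) (c : ℕ × ℕ) (h : c ∈ addb μ) : YoungDiagram where
  cells := insert c μ.cells
  isLowerSet := by
    obtain ⟨i, j⟩ := c
    rw [mem_addb] at h
    obtain ⟨h1, h2, h3⟩ := h
    rintro ⟨k, l⟩ ⟨m, n⟩ hle hk
    simp only [Finset.coe_insert, Set.mem_insert_iff, Prod.mk.injEq, Finset.mem_coe,
      YoungDiagram.mem_cells] at hk ⊢
    obtain ⟨hmk, hnl⟩ := Prod.mk_le_mk.1 hle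
    rcases hk with ⟨rfl, rfl⟩ | hk
    · by_cases hm : m < k
      · right
        exact yd_lower μ (h2.resolve_left (by simp; omega)) (by simp; omega) hnl
      · by_cases hn : n < l
        · right
          exact yd_lower μ (h3.resolve_left (by simp; omega)) hmk (by simp; omega)
        · left; omega
    · right; exact yd_lower μ hk hmk hnl

def remCell (μ : YoungDiagram) (c : ℕ × ℕ) (h : c ∈ remb μ) : YoungDiagram where
  cells := μ.cells.erase c
  isLowerSet := by
    obtain ⟨i, j⟩ := c
    rw [mem_remb] at h
    obtain ⟨h1, h2, h3⟩ := h
    rintro ⟨k, l⟩ ⟨m, n⟩ hle hk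
    simp only [Finset.coe_erase, Set.mem_sdiff, Set.mem_singleton_iff, Prod.mk.injEq,
      Finset.mem_coe, YoungDiagram.mem_cells] at hk ⊢
    obtain ⟨hmk, hnl⟩ := Prod.mk_le_mk.1 hle
    refine ⟨yd_lower μ hk.1 hmk hnl, ?_⟩
    rintro ⟨rfl, rfl⟩
    by_cases hm : m < k
    · exact h2 (yd_lower μ hk.1 hm hnl)
    · by_cases hn : n < l
      · exact h3 (yd_lower μ hk.1 hmk hn)
      · exact hk.2 ⟨by omega, by omega⟩

open Classical in
def addB (lam : ZMod N → YoungDiagram) (b : Bx N) : ZMod N → YoungDiagram :=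
  if h : b ∈ ab lam then
    Function.update lam b.1 (addCell (lam b.1) b.2 ((mem_ab lam b).1 h)) else lam

open Classical in
def remB (lam : ZMod N → YoungDiagram) (b : Bx N) : ZMod N → YoungDiagram :=
  if h : b ∈ rb lam then
    Function.update lam b.1 (remCell (lam b.1) b.2 ((mem_rb lam b).1 h)) else lam

lemma bx_addB {lam : ZMod N → YoungDiagram} {b : Bx N} (h : b ∈ ab lam) :
    bx (addB lam b) = insert b (bx lam) := by
  ext ⟨σ, c⟩
  obtain ⟨τ, d⟩ := b
  rw [addB, dif_pos h, mem_bx, Finset.mem_insert, mem_bx]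
  by_cases hs : σ = τ
  · subst hs
    simp [addCell, ← YoungDiagram.mem_cells]
  · simp [hs]

lemma bx_remB {lam : ZMod N → YoungDiagram} {b : Bx N} (h : b ∈ rb lam) :
    bx (remB lam b) = (bx lam).erase b := by
  ext ⟨σ, c⟩
  obtain ⟨τ, d⟩ := b
  rw [remB, dif_pos h, mem_bx, Finset.mem_erase, mem_bx]
  by_cases hs : σ = τ
  · subst hs
    simp [remCell, ← YoungDiagram.mem_cells]
  · simp [hs]

lemma not_mem_bx_of_ab {lam : ZMod N → YoungDiagram} {b : Bx N} (h : b ∈ ab lam) :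
    b ∉ bx lam := by
  rw [mem_ab, mem_addb] at h
  rw [mem_bx]; exact h.1

lemma mem_bx_of_rb {lam : ZMod N → YoungDiagram} {b : Bx N} (h : b ∈ rb lam) :
    b ∈ bx lam := by
  rw [mem_rb, mem_remb] at h
  rw [mem_bx]; exact h.1

lemma mem_rb_bx (lam : ZMod N → YoungDiagram) (b : Bx N) : b ∈ rb lam ↔
    b ∈ bx lam ∧ (⟨b.1, (b.2.1 + 1, b.2.2)⟩ : Bx N) ∉ bx lam ∧
      (⟨b.1, (b.2.1, b.2.2 + 1)⟩ : Bx N) ∉ bx lam := by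
  simp [mem_bx, mem_rb, mem_remb]

lemma mem_ab_bx (lam : ZMod N → YoungDiagram) (b : Bx N) : b ∈ ab lam ↔
    b ∉ bx lam ∧ (b.2.1 = 0 ∨ (⟨b.1, (b.2.1 - 1, b.2.2)⟩ : Bx N) ∈ bx lam) ∧
      (b.2.2 = 0 ∨ (⟨b.1, (b.2.1, b.2.2 - 1)⟩ : Bx N) ∈ bx lam) := by
  simp [mem_bx, mem_ab, mem_addb]

lemma bx_lower (lam : ZMod N → YoungDiagram) {σ : ZMod N} {i j i' j' : ℕ}
    (h : (⟨σ, (i, j)⟩ : Bx N) ∈ bx lam) (hi : i' ≤ i) (hj : j' ≤ j) :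
    (⟨σ, (i', j')⟩ : Bx N) ∈ bx lam := by
  rw [mem_bx] at *
  exact yd_lower _ h hi hj

lemma mem_rb_addB {lam : ZMod N → YoungDiagram} {b : Bx N} (h : b ∈ ab lam) :
    b ∈ rb (addB lam b) := by
  have hn := not_mem_bx_of_ab h
  obtain ⟨σ, i, j⟩ := b
  rw [mem_rb_bx, bx_addB h]
  refine ⟨Finset.mem_insert_self _ _, ?_, ?_⟩
  · rw [Finset.mem_insert]
    rintro (h' | h')
    · simp at h'
    · exact hn (bx_lower lam h' (by simp) le_rfl)
  · rw [Finset.mem_insert]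
    rintro (h' | h')
    · simp at h'
    · exact hn (bx_lower lam h' le_rfl (by simp))

lemma mem_ab_remB {lam : ZMod N → YoungDiagram} {b : Bx N} (h : b ∈ rb lam) :
    b ∈ ab (remB lam b) := by
  have hn := mem_bx_of_rb h
  obtain ⟨σ, i, j⟩ := b
  rw [mem_ab_bx, bx_remB h]
  refine ⟨Finset.notMem_erase _ _, ?_, ?_⟩
  · by_cases hi : i = 0
    · left; exact hi
    · right
      rw [Finset.mem_erase]
      exact ⟨by simp; omega, bx_lower lam hn (by simp) le_rfl⟩
  · by_cases hi : j = 0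
    · left; exact hi
    · right
      rw [Finset.mem_erase]
      exact ⟨by simp; omega, bx_lower lam hn le_rfl (by simp)⟩

lemma remB_addB {lam : ZMod N → YoungDiagram} {b : Bx N} (h : b ∈ ab lam) :
    remB (addB lam b) b = lam := by
  apply bx_inj
  rw [bx_remB (mem_rb_addB h), bx_addB h, Finset.erase_insert (not_mem_bx_of_ab h)]

lemma addB_remB {lam : ZMod N → YoungDiagram} {b : Bx N} (h : b ∈ rb lam) :
    addB (remB lam b) b = lam := by
  apply bx_inj
  rw [bx_addB (mem_ab_remB h), bx_remB h, Finset.insert_erase (mem_bx_of_rb h)]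

lemma kcharge_eq (lam : ZMod N → YoungDiagram) (σ : ZMod N) :
    kcharge N lam σ = ∑ b ∈ bx lam, if colb b = σ then 1 else 0 := by
  rw [bx, Finset.sum_sigma, kcharge]
  refine Finset.sum_congr rfl fun ω' _ => ?_
  rw [Finset.card_filter]
  rfl

lemma kcharge_addB {lam : ZMod N → YoungDiagram} {b : Bx N} (h : b ∈ ab lam) (σ : ZMod N) :
    kcharge N (addB lam b) σ = kcharge N lam σ + if σ = colb b then 1 else 0 := by
  rw [kcharge_eq, kcharge_eq, bx_addB h, Finset.sum_insert (not_mem_bx_of_ab h), add_comm]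
  simp [eq_comm]

lemma finite_charge (kb : ZMod N → ℕ) :
    {lam : ZMod N → YoungDiagram | ∀ σ : ZMod N, kcharge N lam σ = kb σ}.Finite := by
  classical
  set n := ∑ σ, kb σ with hn
  refine Set.Finite.of_finite_image (f := bx) ?_ (bx_inj.injOn)
  refine Set.Finite.subset (Finset.finite_toSet
    (Finset.powerset ((Finset.univ : Finset (ZMod N)).sigma fun _ =>
      (Finset.range n ×ˢ Finset.range n)))) ?_
  rintro _ ⟨lam, hl, rfl⟩
  simp only [Finset.coe_powerset, Set.mem_preimage, Set.mem_powerset_iff, Finset.coe_subset]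
  have hc : (bx lam).card = n := by
    rw [hn, Finset.sum_congr rfl (fun σ _ => (hl σ).symm)]
    simp_rw [kcharge_eq]
    rw [Finset.sum_comm]
    simp
  rintro ⟨σ, i, j⟩ hb
  simp only [Finset.mem_sigma, Finset.mem_univ, Finset.mem_product, Finset.mem_range, true_and]
  constructor
  · have : ((Finset.range (i + 1)).image fun k => (⟨σ, (k, j)⟩ : Bx N)) ⊆ bx lam := by
      intro x hx
      obtain ⟨k, hk, rfl⟩ := Finset.mem_image.1 hx
      exact bx_lower lam hb (by simpa [Nat.lt_succ_iff] using hk) le_rfl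
    have := Finset.card_le_card this
    rw [Finset.card_image_of_injective _ (by intro a b h; simpa using h), hc] at this
    simpa using this
  · have : ((Finset.range (j + 1)).image fun k => (⟨σ, (i, k)⟩ : Bx N)) ⊆ bx lam := by
      intro x hx
      obtain ⟨k, hk, rfl⟩ := Finset.mem_image.1 hx
      exact bx_lower lam hb le_rfl (by simpa [Nat.lt_succ_iff] using hk)
    have := Finset.card_le_card this
    rw [Finset.card_image_of_injective _ (by intro a b h; simpa using h), hc] at this
    simpa using this

lemma ratX_ne (c : ℂ) : (RatFunc.X + RatFunc.C c : RatFunc ℂ) ≠ 0 := by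
  have : (RatFunc.X + RatFunc.C c : RatFunc ℂ) =
      algebraMap (Polynomial ℂ) (RatFunc ℂ) (Polynomial.X + Polynomial.C c) := by
    simp
  rw [this]
  exact RatFunc.algebraMap_ne_zero (Polynomial.X_add_C_ne_zero c)

lemma ratX_ne' (s c : ℂ) : (RatFunc.X + RatFunc.C s - RatFunc.C c : RatFunc ℂ) ≠ 0 := by
  rw [add_sub_assoc, ← map_sub]
  exact ratX_ne _

lemma Ycol_eq (ε₁ ε₂t : ℂ) (aT : ZMod N → ℂ) (σ : ZMod N) (s : ℂ)
    (lam : ZMod N → YoungDiagram) :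
    Ycol N ε₁ ε₂t aT σ s lam =
      (∏ b ∈ (ab lam).filter (fun b => colb b = σ),
        (RatFunc.X + RatFunc.C s - RatFunc.C (conb ε₁ ε₂t aT b))) /
      (∏ b ∈ (rb lam).filter (fun b => colb b + 1 = σ),
        (RatFunc.X + RatFunc.C s - RatFunc.C (conb ε₁ ε₂t aT b + (ε₁ + ε₂t)))) := by
  have key := corner_prod_all ε₁ ε₂t aT lam
    (fun w τ => if τ = σ then (RatFunc.X + RatFunc.C s - RatFunc.C w : RatFunc ℂ) else 1)
  have hne : ∀ (P : Prop) [Decidable P] (w : ℂ),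
      (if P then (RatFunc.X + RatFunc.C s - RatFunc.C w : RatFunc ℂ) else 1) ≠ 0 := by
    intro P _ w
    split_ifs
    · exact ratX_ne' _ _
    · exact one_ne_zero
  have hdiv : ∀ (P : Prop) [Decidable P] (u v : RatFunc ℂ),
      (if P then u / v else 1) = (if P then u else 1) / (if P then v else 1) := by
    intro P _ u v
    split_ifs <;> simp
  rw [Finset.prod_filter, Finset.prod_filter, eq_div_iff (Finset.prod_ne_zero_iff.2
    (fun b _ => hne _ _))]
  rw [Finset.prod_ite_eq' Finset.univ σ (fun τ => (RatFunc.X + RatFunc.C s - RatFunc.C (aT τ)))]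
    at key
  simp only [Finset.mem_univ, if_true] at key
  have hY : Ycol N ε₁ ε₂t aT σ s lam = (RatFunc.X + RatFunc.C s - RatFunc.C (aT σ)) *
      (((∏ b ∈ bx lam, if colb b = σ then
        (RatFunc.X + RatFunc.C s - RatFunc.C (conb ε₁ ε₂t aT b + ε₁) : RatFunc ℂ) else 1) /
       (∏ b ∈ bx lam, if colb b = σ then
        (RatFunc.X + RatFunc.C s - RatFunc.C (conb ε₁ ε₂t aT b) : RatFunc ℂ) else 1)) *
      ((∏ b ∈ bx lam, if colb b + 1 = σ then
        (RatFunc.X + RatFunc.C s - RatFunc.C (conb ε₁ ε₂t aT b + ε₂t) : RatFunc ℂ) else 1) /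
       (∏ b ∈ bx lam, if colb b + 1 = σ then
        (RatFunc.X + RatFunc.C s - RatFunc.C (conb ε₁ ε₂t aT b + (ε₁ + ε₂t)) : RatFunc ℂ)
          else 1))) := by
    rw [Ycol, ← Finset.prod_div_distrib, ← Finset.prod_div_distrib, ← Finset.prod_mul_distrib,
      bx, Finset.prod_sigma]
    congr 1
    refine Finset.prod_congr rfl fun ω' _ => Finset.prod_congr rfl fun c _ => ?_
    simp only [hdiv, colb, conb, eq_sub_iff_add_eq, ← add_assoc]
    congr!
  rw [hY]
  have n1 : (∏ b ∈ bx lam, if colb b = σ then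
        (RatFunc.X + RatFunc.C s - RatFunc.C (conb ε₁ ε₂t aT b) : RatFunc ℂ) else 1) ≠ 0 :=
    Finset.prod_ne_zero_iff.2 (fun b _ => hne _ _)
  have n2 : (∏ b ∈ bx lam, if colb b + 1 = σ then
        (RatFunc.X + RatFunc.C s - RatFunc.C (conb ε₁ ε₂t aT b + (ε₁ + ε₂t)) : RatFunc ℂ)
          else 1) ≠ 0 :=
    Finset.prod_ne_zero_iff.2 (fun b _ => hne _ _)
  generalize (∏ b ∈ bx lam, if colb b = σ then
        (RatFunc.X + RatFunc.C s - RatFunc.C (conb ε₁ ε₂t aT b) : RatFunc ℂ) else 1) = A1 at *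
  generalize (∏ b ∈ bx lam, if colb b + 1 = σ then
        (RatFunc.X + RatFunc.C s - RatFunc.C (conb ε₁ ε₂t aT b + (ε₁ + ε₂t)) : RatFunc ℂ)
          else 1) = A2 at *
  field_simp
  linear_combination key

lemma count_corner (ε₁ ε₂t : ℂ) (aT : ZMod N → ℂ) (σ : ZMod N) (lam : ZMod N → YoungDiagram) :
    ((ab lam).filter (fun b => colb b = σ)).card =
      ((rb lam).filter (fun b => colb b + 1 = σ)).card + 1 := by
  have key := corner_sum_all ε₁ ε₂t aT lam (fun _ τ => if τ = σ then 1 else 0)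
  rw [Finset.sum_ite_eq' Finset.univ σ (fun _ => 1)] at key
  simp only [Finset.mem_univ, if_true] at key
  rw [Finset.card_filter, Finset.card_filter]
  omega

lemma e2_mul (w w' : ℂ × ZMod N) : e2 N w * e2 N w' = e2 N (w + w') := by
  simp [e2, AddMonoidAlgebra.single_mul_single]

lemma e2_zero : e2 N 0 = 1 := rfl

/-- weight of box -/
def wtb (ε₁ ε₂t : ℂ) (aT : ZMod N → ℂ) (b : Bx N) : ℂ × ZMod N := (conb ε₁ ε₂t aT b, colb b)

lemma colChar_eq (ε₁ ε₂t : ℂ) (aT : ZMod N → ℂ) (lam : ZMod N → YoungDiagram) :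
    colChar N ε₁ ε₂t aT lam =
      (∑ σ, e2 N (aT σ, σ)) * (∑ b ∈ bx lam, e2 N (-wtb ε₁ ε₂t aT b)) +
      e2 N (ε₁ + ε₂t, 1) * (∑ b ∈ bx lam, e2 N (wtb ε₁ ε₂t aT b)) * (∑ σ, e2 N (-(aT σ, σ))) -
      (1 - e2 N (ε₁, 0)) * (1 - e2 N (ε₂t, 1)) * (∑ b ∈ bx lam, e2 N (wtb ε₁ ε₂t aT b)) *
        (∑ b ∈ bx lam, e2 N (-wtb ε₁ ε₂t aT b)) := by
  have hV : (∑ b ∈ bx lam, e2 N (wtb ε₁ ε₂t aT b)) =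
      ∑ σ, e2 N (aT σ, σ) * chiT N ε₁ ε₂t (lam σ) := by
    rw [bx, Finset.sum_sigma]
    refine Finset.sum_congr rfl fun σ _ => ?_
    rw [chiT, Finset.mul_sum]
    refine Finset.sum_congr rfl fun c _ => ?_
    rw [e2_mul]; rfl
  have hVs : (∑ b ∈ bx lam, e2 N (-wtb ε₁ ε₂t aT b)) =
      ∑ σ, e2 N (-(aT σ, σ)) * chiTstar N ε₁ ε₂t (lam σ) := by
    rw [bx, Finset.sum_sigma]
    refine Finset.sum_congr rfl fun σ _ => ?_
    rw [chiTstar, Finset.mul_sum]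
    refine Finset.sum_congr rfl fun c _ => ?_
    rw [e2_mul]
    congr 1
    simp only [wtb, conb, colb, Prod.neg_mk, Prod.mk_add_mk, neg_add]
  rw [hV, hVs, mul_assoc (e2 N _), mul_assoc ((1 - e2 N (ε₁, 0)) * (1 - e2 N (ε₂t, 1))),
    Finset.sum_mul_sum, Finset.sum_mul_sum, Finset.sum_mul_sum, Finset.mul_sum, Finset.mul_sum,
    ← Finset.sum_add_distrib, ← Finset.sum_sub_distrib, colChar]
  refine Finset.sum_congr rfl fun σ _ => ?_
  rw [Finset.mul_sum, Finset.mul_sum, ← Finset.sum_add_distrib, ← Finset.sum_sub_distrib]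
  refine Finset.sum_congr rfl fun τ _ => ?_
  have : e2 N (aT σ - aT τ, σ - τ) = e2 N (aT σ, σ) * e2 N (-(aT τ, τ)) := by
    rw [e2_mul]; simp [sub_eq_add_neg]
  rw [this]
  ring

lemma corner_A (ε₁ ε₂t : ℂ) (aT : ZMod N → ℂ) (lam : ZMod N → YoungDiagram) :
    (∑ σ, e2 N (aT σ, σ)) - (1 - e2 N (ε₁, 0)) * (1 - e2 N (ε₂t, 1)) *
        (∑ b ∈ bx lam, e2 N (wtb ε₁ ε₂t aT b)) =
      (∑ b ∈ ab lam, e2 N (wtb ε₁ ε₂t aT b)) -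
        e2 N (ε₁ + ε₂t, 1) * (∑ b ∈ rb lam, e2 N (wtb ε₁ ε₂t aT b)) := by
  have key := corner_sum_all ε₁ ε₂t aT lam (fun w τ => e2 N (w, τ))
  have h0 : ∀ b : Bx N, e2 N (conb ε₁ ε₂t aT b, colb b) = e2 N (wtb ε₁ ε₂t aT b) := fun b => rfl
  have h1 : ∀ b : Bx N, e2 N (conb ε₁ ε₂t aT b + ε₁, colb b) =
      e2 N (ε₁, 0) * e2 N (wtb ε₁ ε₂t aT b) := by
    intro b; rw [e2_mul]; simp [wtb, add_comm]
  have h2 : ∀ b : Bx N, e2 N (conb ε₁ ε₂t aT b + ε₂t, colb b + 1) =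
      e2 N (ε₂t, 1) * e2 N (wtb ε₁ ε₂t aT b) := by
    intro b; rw [e2_mul]; simp [wtb, add_comm]
  have h3 : ∀ b : Bx N, e2 N (conb ε₁ ε₂t aT b + (ε₁ + ε₂t), colb b + 1) =
      e2 N (ε₁ + ε₂t, 1) * e2 N (wtb ε₁ ε₂t aT b) := by
    intro b; rw [e2_mul]; simp [wtb, add_comm]
  have h4 : e2 N (ε₁, 0) * e2 N (ε₂t, 1) = e2 N (ε₁ + ε₂t, 1) := by
    rw [e2_mul]; simp
  simp only [h0, h1, h2, h3, ← Finset.mul_sum] at key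
  rw [← h4] at *
  linear_combination key

lemma corner_As (ε₁ ε₂t : ℂ) (aT : ZMod N → ℂ) (lam : ZMod N → YoungDiagram) :
    (∑ σ, e2 N (-(aT σ, σ))) - (1 - e2 N (-(ε₁, 0))) * (1 - e2 N (-(ε₂t, 1))) *
        (∑ b ∈ bx lam, e2 N (-wtb ε₁ ε₂t aT b)) =
      (∑ b ∈ ab lam, e2 N (-wtb ε₁ ε₂t aT b)) -
        e2 N (-(ε₁ + ε₂t, 1)) * (∑ b ∈ rb lam, e2 N (-wtb ε₁ ε₂t aT b)) := by
  have key := corner_sum_all ε₁ ε₂t aT lam (fun w τ => e2 N (-(w, τ)))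
  have h0 : ∀ b : Bx N, e2 N (-(conb ε₁ ε₂t aT b, colb b)) = e2 N (-wtb ε₁ ε₂t aT b) :=
    fun b => rfl
  have h1 : ∀ b : Bx N, e2 N (-(conb ε₁ ε₂t aT b + ε₁, colb b)) =
      e2 N (-(ε₁, 0)) * e2 N (-wtb ε₁ ε₂t aT b) := by
    intro b; rw [e2_mul]; simp [wtb, add_comm]
  have h2 : ∀ b : Bx N, e2 N (-(conb ε₁ ε₂t aT b + ε₂t, colb b + 1)) =
      e2 N (-(ε₂t, 1)) * e2 N (-wtb ε₁ ε₂t aT b) := by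
    intro b; rw [e2_mul]; simp [wtb, add_comm]
  have h3 : ∀ b : Bx N, e2 N (-(conb ε₁ ε₂t aT b + (ε₁ + ε₂t), colb b + 1)) =
      e2 N (-(ε₁ + ε₂t, 1)) * e2 N (-wtb ε₁ ε₂t aT b) := by
    intro b; rw [e2_mul]; congr 1; simp [wtb]
  have h4 : e2 N (-(ε₁, 0)) * e2 N (-(ε₂t, 1)) = e2 N (-(ε₁ + ε₂t, 1)) := by
    rw [e2_mul]; simp [add_comm]
  simp only [h0, h1, h2, h3, ← Finset.mul_sum] at key
  rw [← h4] at *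
  linear_combination key

lemma multiset_single_inj {G : Type*} (M M' : Multiset G)
    (h : (M.map fun w => AddMonoidAlgebra.single w (1 : ℤ)).sum =
      (M'.map fun w => AddMonoidAlgebra.single w (1 : ℤ)).sum) : M = M' := by
  classical
  have key : ∀ (M : Multiset G) (x : G),
      ((M.map fun w => AddMonoidAlgebra.single w (1 : ℤ)).sum).coeff x = (M.count x : ℤ) := by
    intro M x
    induction M using Multiset.induction_on with
    | empty => simp
    | cons a M ih =>
      rw [Multiset.map_cons, Multiset.sum_cons, AddMonoidAlgebra.coeff_add, Finsupp.add_apply, ih,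
        AddMonoidAlgebra.coeff_single, Finsupp.single_apply, Multiset.count_cons]
      by_cases hx : x = a
      · subst hx; simp [add_comm]
      · simp [hx, Ne.symm hx]
  ext x
  have := key M x
  rw [h, key M' x] at this
  exact_mod_cast this.symm

lemma T_step (ε₁ ε₂t : ℂ) (aT : ZMod N → ℂ)
    (T : (ZMod N → YoungDiagram) → Multiset (ℂ × ZMod N))
    (hT : ∀ lam : ZMod N → YoungDiagram,
      ((T lam).map fun w => AddMonoidAlgebra.single w (1 : ℤ)).sum =
        colChar N ε₁ ε₂t aT lam)
    {lam : ZMod N → YoungDiagram} {b : Bx N} (hb : b ∈ ab lam) :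
    T (addB lam b) + (rb lam).val.map (fun c => wtb ε₁ ε₂t aT c + (ε₁ + ε₂t, 1) - wtb ε₁ ε₂t aT b)
      + ((rb (addB lam b)).erase b).val.map (fun c => wtb ε₁ ε₂t aT b - wtb ε₁ ε₂t aT c) =
    T lam + ((ab lam).erase b).val.map (fun c => wtb ε₁ ε₂t aT c - wtb ε₁ ε₂t aT b)
      + (ab (addB lam b)).val.map
        (fun c => wtb ε₁ ε₂t aT b + (ε₁ + ε₂t, 1) - wtb ε₁ ε₂t aT c) := by
  apply multiset_single_inj
  simp only [Multiset.map_add, Multiset.sum_add, Multiset.map_map, hT]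
  change _ + (∑ c ∈ rb lam, e2 N (wtb ε₁ ε₂t aT c + (ε₁ + ε₂t, 1) - wtb ε₁ ε₂t aT b)) +
      (∑ c ∈ (rb (addB lam b)).erase b, e2 N (wtb ε₁ ε₂t aT b - wtb ε₁ ε₂t aT c)) =
    _ + (∑ c ∈ (ab lam).erase b, e2 N (wtb ε₁ ε₂t aT c - wtb ε₁ ε₂t aT b)) +
      (∑ c ∈ ab (addB lam b), e2 N (wtb ε₁ ε₂t aT b + (ε₁ + ε₂t, 1) - wtb ε₁ ε₂t aT c))
  have s1 := Finset.sum_erase_add (rb (addB lam b))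
    (fun c => e2 N (wtb ε₁ ε₂t aT b - wtb ε₁ ε₂t aT c)) (mem_rb_addB hb)
  have s2 := Finset.sum_erase_add (ab lam)
    (fun c => e2 N (wtb ε₁ ε₂t aT c - wtb ε₁ ε₂t aT b)) hb
  rw [sub_self] at s1 s2
  have t1 : ∑ c ∈ rb lam, e2 N (wtb ε₁ ε₂t aT c + (ε₁ + ε₂t, 1) - wtb ε₁ ε₂t aT b) =
      e2 N (-wtb ε₁ ε₂t aT b) * e2 N (ε₁ + ε₂t, 1) * ∑ c ∈ rb lam, e2 N (wtb ε₁ ε₂t aT c) := by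
    rw [Finset.mul_sum]
    refine Finset.sum_congr rfl fun c _ => ?_
    rw [e2_mul, e2_mul]; congr 1; abel
  have t2 : ∑ c ∈ rb (addB lam b), e2 N (wtb ε₁ ε₂t aT b - wtb ε₁ ε₂t aT c) =
      e2 N (wtb ε₁ ε₂t aT b) * ∑ c ∈ rb (addB lam b), e2 N (-wtb ε₁ ε₂t aT c) := by
    rw [Finset.mul_sum]
    refine Finset.sum_congr rfl fun c _ => ?_
    rw [e2_mul]; congr 1; abel
  have t3 : ∑ c ∈ ab lam, e2 N (wtb ε₁ ε₂t aT c - wtb ε₁ ε₂t aT b) =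
      e2 N (-wtb ε₁ ε₂t aT b) * ∑ c ∈ ab lam, e2 N (wtb ε₁ ε₂t aT c) := by
    rw [Finset.mul_sum]
    refine Finset.sum_congr rfl fun c _ => ?_
    rw [e2_mul]; congr 1; abel
  have t4 : ∑ c ∈ ab (addB lam b), e2 N (wtb ε₁ ε₂t aT b + (ε₁ + ε₂t, 1) - wtb ε₁ ε₂t aT c) =
      e2 N (wtb ε₁ ε₂t aT b) * e2 N (ε₁ + ε₂t, 1) *
        ∑ c ∈ ab (addB lam b), e2 N (-wtb ε₁ ε₂t aT c) := by
    rw [Finset.mul_sum]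
    refine Finset.sum_congr rfl fun c _ => ?_
    rw [e2_mul, e2_mul]; congr 1; abel
  rw [t2] at s1
  rw [t3] at s2
  rw [t1, t4, colChar_eq, colChar_eq]
  have u1 := corner_A ε₁ ε₂t aT lam
  have u2 := corner_As ε₁ ε₂t aT (addB lam b)
  have v1 : ∑ c ∈ bx (addB lam b), e2 N (wtb ε₁ ε₂t aT c) =
      e2 N (wtb ε₁ ε₂t aT b) + ∑ c ∈ bx lam, e2 N (wtb ε₁ ε₂t aT c) := by
    rw [bx_addB hb, Finset.sum_insert (not_mem_bx_of_ab hb)]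
  have v2 : ∑ c ∈ bx (addB lam b), e2 N (-wtb ε₁ ε₂t aT c) =
      e2 N (-wtb ε₁ ε₂t aT b) + ∑ c ∈ bx lam, e2 N (-wtb ε₁ ε₂t aT c) := by
    rw [bx_addB hb, Finset.sum_insert (not_mem_bx_of_ab hb)]
  rw [v2] at u2
  rw [v1, v2]
  have q0 : e2 N (wtb ε₁ ε₂t aT b) * e2 N (-wtb ε₁ ε₂t aT b) = 1 := by
    rw [e2_mul, add_neg_cancel]; rfl
  have q1 : e2 N (ε₁, 0) * e2 N (-(ε₁, 0)) = 1 := by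
    rw [e2_mul, add_neg_cancel]; rfl
  have q2 : e2 N (ε₂t, 1) * e2 N (-(ε₂t, 1)) = 1 := by
    rw [e2_mul, add_neg_cancel]; rfl
  have q3 : e2 N (ε₁, 0) * e2 N (ε₂t, 1) = e2 N (ε₁ + ε₂t, 1) := by
    rw [e2_mul]; simp
  have q6 : e2 N (ε₁ + ε₂t, 1) * e2 N (-(ε₁ + ε₂t, 1)) = 1 := by
    rw [e2_mul, add_neg_cancel]; rfl
  have q5 : (1 - e2 N (ε₁, 0)) * (1 - e2 N (ε₂t, 1)) = e2 N (ε₁ + ε₂t, 1) *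
      ((1 - e2 N (-(ε₁, 0))) * (1 - e2 N (-(ε₂t, 1)))) := by
    rw [← q3]
    linear_combination (e2 N (ε₂t, 1) - 1) * q1 +
      (e2 N (ε₁, 0) - e2 N (ε₁, 0) * e2 N (-(ε₁, 0))) * q2
  linear_combination e2 N (-wtb ε₁ ε₂t aT b) * u1 +
    e2 N (ε₁ + ε₂t, 1) * e2 N (wtb ε₁ ε₂t aT b) * u2 + s1 - s2 -
    e2 N (wtb ε₁ ε₂t aT b) *
      (e2 N (-wtb ε₁ ε₂t aT b) + ∑ c ∈ bx lam, e2 N (-wtb ε₁ ε₂t aT c)) * q5 -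
    e2 N (wtb ε₁ ε₂t aT b) * (∑ c ∈ rb (addB lam b), e2 N (-wtb ε₁ ε₂t aT c)) * q6

lemma T_step_prod (ε₁ ε₂t : ℂ) (aT : ZMod N → ℂ)
    (T : (ZMod N → YoungDiagram) → Multiset (ℂ × ZMod N))
    (hT : ∀ lam : ZMod N → YoungDiagram,
      ((T lam).map fun w => AddMonoidAlgebra.single w (1 : ℤ)).sum =
        colChar N ε₁ ε₂t aT lam)
    {lam : ZMod N → YoungDiagram} {b : Bx N} (hb : b ∈ ab lam) {ω : ZMod N} (hω : colb b = ω) :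
    (((T (addB lam b)).filter fun p => p.2 = 0).map Prod.fst).prod *
      (∏ c ∈ (rb lam).filter (fun c => colb c + 1 = ω),
        (conb ε₁ ε₂t aT c + (ε₁ + ε₂t) - conb ε₁ ε₂t aT b)) *
      (∏ c ∈ ((rb (addB lam b)).filter (fun c => colb c = ω)).erase b,
        (conb ε₁ ε₂t aT b - conb ε₁ ε₂t aT c)) =
    (((T lam).filter fun p => p.2 = 0).map Prod.fst).prod *
      (∏ c ∈ ((ab lam).filter (fun c => colb c = ω)).erase b,
        (conb ε₁ ε₂t aT c - conb ε₁ ε₂t aT b)) *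
      (∏ c ∈ (ab (addB lam b)).filter (fun c => colb c = ω + 1),
        (conb ε₁ ε₂t aT b + (ε₁ + ε₂t) - conb ε₁ ε₂t aT c)) := by
  classical
  have key := congrArg (fun M => ((M.filter fun p => p.2 = 0).map Prod.fst).prod)
    (T_step ε₁ ε₂t aT T hT hb)
  have conv : ∀ (s : Finset (Bx N)) (f : Bx N → ℂ × ZMod N),
      (((s.val.map f).filter fun p => p.2 = 0).map Prod.fst).prod =
        ∏ c ∈ s.filter (fun c => (f c).2 = 0), (f c).1 := by
    intro s f
    rw [Multiset.filter_map, Multiset.map_map]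
    rfl
  simp only [Multiset.filter_add, Multiset.map_add, Multiset.prod_add, conv] at key
  have f1 : (rb lam).filter (fun c => colb c + 1 = ω) = (rb lam).filter
      (fun c => (wtb ε₁ ε₂t aT c + (ε₁ + ε₂t, 1) - wtb ε₁ ε₂t aT b).2 = 0) := by
    refine Finset.filter_congr fun c _ => ?_
    simp [wtb, sub_eq_zero, hω]
  have f2 : ((rb (addB lam b)).filter (fun c => colb c = ω)).erase b =
      ((rb (addB lam b)).erase b).filter
      (fun c => (wtb ε₁ ε₂t aT b - wtb ε₁ ε₂t aT c).2 = 0) := by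
    ext c
    simp [wtb, sub_eq_zero, hω, and_assoc, eq_comm (a := ω)]
  have f3 : ((ab lam).filter (fun c => colb c = ω)).erase b =
      ((ab lam).erase b).filter
      (fun c => (wtb ε₁ ε₂t aT c - wtb ε₁ ε₂t aT b).2 = 0) := by
    ext c
    simp [wtb, sub_eq_zero, hω, and_assoc]
  have f4 : (ab (addB lam b)).filter (fun c => colb c = ω + 1) = (ab (addB lam b)).filter
      (fun c => (wtb ε₁ ε₂t aT b + (ε₁ + ε₂t, 1) - wtb ε₁ ε₂t aT c).2 = 0) := by
    refine Finset.filter_congr fun c _ => ?_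
    simp [wtb, sub_eq_zero, hω, eq_comm (a := ω + 1)]
  rw [f1, f2, f3, f4]
  exact key

lemma gen_eq {ε₁ ε₂t : ℂ} {aT : ZMod N → ℂ}
    (hgen : ∀ ω' ω'' : ZMod N, ∀ i j : ℤ,
      aT ω' - aT ω'' + (i : ℂ) * ε₁ + (j : ℂ) * ε₂t = 0 → ω' = ω'' ∧ i = 0 ∧ j = 0)
    (b c : Bx N) (m n : ℕ)
    (h : conb ε₁ ε₂t aT b + ((m : ℂ) * ε₁ + (n : ℂ) * ε₂t) = conb ε₁ ε₂t aT c) :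
    c = ⟨b.1, (b.2.1 + m, b.2.2 + n)⟩ := by
  obtain ⟨σ, i, j⟩ := b
  obtain ⟨τ, k, l⟩ := c
  simp only [conb, ctil] at h
  obtain ⟨h1, h2, h3⟩ := hgen σ τ ((i : ℤ) + m - k) ((j : ℤ) + n - l) (by
    push_cast
    linear_combination h)
  subst h1
  have : k = i + m := by omega
  have : l = j + n := by omega
  subst k l
  rfl

lemma conb_inj {ε₁ ε₂t : ℂ} {aT : ZMod N → ℂ}
    (hgen : ∀ ω' ω'' : ZMod N, ∀ i j : ℤ,
      aT ω' - aT ω'' + (i : ℂ) * ε₁ + (j : ℂ) * ε₂t = 0 → ω' = ω'' ∧ i = 0 ∧ j = 0) :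
    Function.Injective (conb ε₁ ε₂t aT) := by
  intro b c h
  exact (gen_eq hgen b c 0 0 (by simpa using h)).symm

lemma rb_shift_ne_ab (lam : ZMod N → YoungDiagram) (b : Bx N) (hr : b ∈ rb lam)
    (ha : (⟨b.1, (b.2.1 + 1, b.2.2 + 1)⟩ : Bx N) ∈ ab lam) : False := by
  rw [mem_rb_bx] at hr
  rw [mem_ab_bx] at ha
  have := ha.2.2
  simp at this
  exact hr.2.1 this

lemma partial_frac {ι : Type*} [DecidableEq ι] (s : Finset ι) (v : ι → ℂ) (hv : Function.Injective v)
    (p : Polynomial ℂ) :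
    ∃ q : Polynomial ℂ, algebraMap (Polynomial ℂ) (RatFunc ℂ) p /
        (∏ i ∈ s, (RatFunc.X - RatFunc.C (v i))) =
      algebraMap (Polynomial ℂ) (RatFunc ℂ) q +
      ∑ i ∈ s, RatFunc.C (p.eval (v i) / ∏ j ∈ s.erase i, (v i - v j)) /
        (RatFunc.X - RatFunc.C (v i)) := by
  have hd : ∏ i ∈ s, (Polynomial.X - Polynomial.C (v i)) ∣
      p - ∑ i ∈ s, Polynomial.C (p.eval (v i) / ∏ j ∈ s.erase i, (v i - v j)) *
        ∏ j ∈ s.erase i, (Polynomial.X - Polynomial.C (v j)) := by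
    apply Finset.prod_dvd_of_coprime
    · intro i _ j _ hij
      exact Polynomial.pairwise_coprime_X_sub_C hv hij
    · intro i hi
      rw [Polynomial.dvd_iff_isRoot, Polynomial.IsRoot.def, Polynomial.eval_sub,
        Polynomial.eval_finsetSum, Finset.sum_eq_single i]
      · simp only [Polynomial.eval_mul, Polynomial.eval_C, Polynomial.eval_prod,
          Polynomial.eval_sub, Polynomial.eval_X]
        rw [div_mul_cancel₀, sub_self]
        refine Finset.prod_ne_zero_iff.2 fun j hj => ?_
        rw [sub_ne_zero]
        exact fun h => (Finset.ne_of_mem_erase hj) (hv h).symm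
      · intro j _ hji
        rw [Polynomial.eval_mul, Polynomial.eval_prod]
        apply mul_eq_zero_of_right
        exact Finset.prod_eq_zero (Finset.mem_erase.2 ⟨hji.symm, hi⟩) (by simp)
      · exact fun h => absurd hi h
  obtain ⟨q, hq⟩ := hd
  refine ⟨q, ?_⟩
  have hne : ∀ c : ℂ, (RatFunc.X - RatFunc.C c : RatFunc ℂ) ≠ 0 := by
    intro c
    rw [sub_eq_add_neg, ← map_neg]
    exact ratX_ne _
  have hpne : (∏ i ∈ s, (RatFunc.X - RatFunc.C (v i)) : RatFunc ℂ) ≠ 0 :=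
    Finset.prod_ne_zero_iff.2 fun i _ => hne _
  have hq' := congrArg (algebraMap (Polynomial ℂ) (RatFunc ℂ)) (sub_eq_iff_eq_add.1 hq)
  simp only [map_add, map_mul, map_prod, map_sub, map_sum, RatFunc.algebraMap_X,
    RatFunc.algebraMap_C] at hq'
  rw [hq', add_div, mul_comm, mul_div_cancel_right₀ _ hpne, Finset.sum_div]
  congr 1
  refine Finset.sum_congr rfl fun i hi => ?_
  rw [← Finset.prod_erase_mul s _ hi, mul_comm (∏ x ∈ s.erase i, _) (_ - _), ← div_div]
  rw [div_right_comm, mul_div_cancel_right₀]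
  exact Finset.prod_ne_zero_iff.2 fun i _ => hne _

/-- numerator of the pseudo-measure -/
lemma num_eq (ε₁ ε₂t : ℂ) (aT mp mm : ZMod N → ℂ) (lam : ZMod N → YoungDiagram) :
    (∏ ω' : ZMod N, ∏ c ∈ (lam ω').cells,
      ((aT ω' + ctil ε₁ ε₂t c - mp (ω' + (c.2 : ZMod N))) *
        (mm (ω' + (c.2 : ZMod N)) - aT ω' - ctil ε₁ ε₂t c))) =
    ∏ b ∈ bx lam, ((conb ε₁ ε₂t aT b - mp (colb b)) * (mm (colb b) - conb ε₁ ε₂t aT b)) := by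
  rw [bx, Finset.prod_sigma]
  refine Finset.prod_congr rfl fun ω' _ => Finset.prod_congr rfl fun c _ => ?_
  simp only [conb, colb, sub_sub]

/-- residue of `Y_{ω+1}(x+ε)` -/
def resY (ε₁ ε₂t : ℂ) (aT : ZMod N → ℂ) (ω : ZMod N) (lam : ZMod N → YoungDiagram)
    (b : Bx N) : ℂ :=
  (∏ c ∈ (ab lam).filter (fun c => colb c = ω + 1),
        (conb ε₁ ε₂t aT b + (ε₁ + ε₂t) - conb ε₁ ε₂t aT c)) /
  ∏ c ∈ ((rb lam).filter (fun c => colb c = ω)).erase b,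
        (conb ε₁ ε₂t aT b - conb ε₁ ε₂t aT c)

/-- residue of `1/Y_ω(x)` -/
def resI (ε₁ ε₂t : ℂ) (aT : ZMod N → ℂ) (ω : ZMod N) (lam : ZMod N → YoungDiagram)
    (b : Bx N) : ℂ :=
  (∏ c ∈ (rb lam).filter (fun c => colb c + 1 = ω),
        (conb ε₁ ε₂t aT b - (conb ε₁ ε₂t aT c + (ε₁ + ε₂t)))) /
  ∏ c ∈ ((ab lam).filter (fun c => colb c = ω)).erase b,
        (conb ε₁ ε₂t aT b - conb ε₁ ε₂t aT c)

lemma residue_cancel (ε₁ ε₂t : ℂ) (aT mp mm : ZMod N → ℂ)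
    (hgen : ∀ ω' ω'' : ZMod N, ∀ i j : ℤ,
      aT ω' - aT ω'' + (i : ℂ) * ε₁ + (j : ℂ) * ε₂t = 0 → ω' = ω'' ∧ i = 0 ∧ j = 0)
    (T : (ZMod N → YoungDiagram) → Multiset (ℂ × ZMod N))
    (hT : ∀ lam : ZMod N → YoungDiagram,
      ((T lam).map fun w => AddMonoidAlgebra.single w (1 : ℤ)).sum =
        colChar N ε₁ ε₂t aT lam)
    {lam : ZMod N → YoungDiagram} {b : Bx N} (hb : b ∈ ab lam) {ω : ZMod N} (hω : colb b = ω) :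
    muOrb N ε₁ ε₂t aT mp mm T (addB lam b) * resY ε₁ ε₂t aT ω (addB lam b) b +
      muOrb N ε₁ ε₂t aT mp mm T lam *
        ((conb ε₁ ε₂t aT b - mp ω) * (conb ε₁ ε₂t aT b - mm ω) * resI ε₁ ε₂t aT ω lam b) = 0 := by
  have key := T_step_prod ε₁ ε₂t aT T hT hb hω
  rw [muOrb, muOrb, num_eq, num_eq, bx_addB hb, Finset.prod_insert (not_mem_bx_of_ab hb), hω,
    resY, resI]
  have sgn1 : (∏ c ∈ (rb lam).filter (fun c => colb c + 1 = ω),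
        (conb ε₁ ε₂t aT b - (conb ε₁ ε₂t aT c + (ε₁ + ε₂t)))) =
      (-1) ^ ((rb lam).filter (fun c => colb c + 1 = ω)).card *
      ∏ c ∈ (rb lam).filter (fun c => colb c + 1 = ω),
        (conb ε₁ ε₂t aT c + (ε₁ + ε₂t) - conb ε₁ ε₂t aT b) := by
    rw [← Finset.prod_const, ← Finset.prod_mul_distrib]
    exact Finset.prod_congr rfl fun c _ => by ring
  have sgn2 : (∏ c ∈ ((ab lam).filter (fun c => colb c = ω)).erase b,
        (conb ε₁ ε₂t aT b - conb ε₁ ε₂t aT c)) =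
      (-1) ^ ((rb lam).filter (fun c => colb c + 1 = ω)).card *
      ∏ c ∈ ((ab lam).filter (fun c => colb c = ω)).erase b,
        (conb ε₁ ε₂t aT c - conb ε₁ ε₂t aT b) := by
    have hc : ((rb lam).filter (fun c => colb c + 1 = ω)).card =
        (((ab lam).filter (fun c => colb c = ω)).erase b).card := by
      rw [Finset.card_erase_of_mem (Finset.mem_filter.2 ⟨hb, hω⟩), count_corner ε₁ ε₂t aT]
      rfl
    rw [hc, ← Finset.prod_const, ← Finset.prod_mul_distrib]
    exact Finset.prod_congr rfl fun c _ => by ring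
  rw [sgn1, sgn2, mul_div_mul_left _ _ (pow_ne_zero _ (by norm_num))]
  have nK : (∏ c ∈ (rb lam).filter (fun c => colb c + 1 = ω),
        (conb ε₁ ε₂t aT c + (ε₁ + ε₂t) - conb ε₁ ε₂t aT b)) ≠ 0 := by
    refine Finset.prod_ne_zero_iff.2 fun c hc => ?_
    rw [sub_ne_zero]
    intro h
    have := gen_eq hgen c b 1 1 (by simpa using h)
    exact rb_shift_ne_ab lam c (Finset.mem_filter.1 hc).1 (this ▸ hb)
  have nQ : (∏ c ∈ (ab (addB lam b)).filter (fun c => colb c = ω + 1),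
        (conb ε₁ ε₂t aT b + (ε₁ + ε₂t) - conb ε₁ ε₂t aT c)) ≠ 0 := by
    refine Finset.prod_ne_zero_iff.2 fun c hc => ?_
    rw [sub_ne_zero]
    intro h
    have := gen_eq hgen b c 1 1 (by simpa using h)
    exact rb_shift_ne_ab (addB lam b) b (mem_rb_addB hb) (this ▸ (Finset.mem_filter.1 hc).1)
  have nL : (∏ c ∈ ((rb (addB lam b)).filter (fun c => colb c = ω)).erase b,
        (conb ε₁ ε₂t aT b - conb ε₁ ε₂t aT c)) ≠ 0 := by
    refine Finset.prod_ne_zero_iff.2 fun c hc => ?_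
    rw [sub_ne_zero]
    exact fun h => (Finset.ne_of_mem_erase hc) (conb_inj hgen h).symm
  have nM : (∏ c ∈ ((ab lam).filter (fun c => colb c = ω)).erase b,
        (conb ε₁ ε₂t aT c - conb ε₁ ε₂t aT b)) ≠ 0 := by
    refine Finset.prod_ne_zero_iff.2 fun c hc => ?_
    rw [sub_ne_zero]
    exact fun h => (Finset.ne_of_mem_erase hc) (conb_inj hgen h)
  revert key nK nQ nL nM
  generalize (∏ c ∈ (rb lam).filter (fun c => colb c + 1 = ω),
        (conb ε₁ ε₂t aT c + (ε₁ + ε₂t) - conb ε₁ ε₂t aT b)) = K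
  generalize (∏ c ∈ (ab (addB lam b)).filter (fun c => colb c = ω + 1),
        (conb ε₁ ε₂t aT b + (ε₁ + ε₂t) - conb ε₁ ε₂t aT c)) = Q
  generalize (∏ c ∈ ((rb (addB lam b)).filter (fun c => colb c = ω)).erase b,
        (conb ε₁ ε₂t aT b - conb ε₁ ε₂t aT c)) = L
  generalize (∏ c ∈ ((ab lam).filter (fun c => colb c = ω)).erase b,
        (conb ε₁ ε₂t aT c - conb ε₁ ε₂t aT b)) = M
  generalize (((T (addB lam b)).filter fun p => p.2 = 0).map Prod.fst).prod = D
  generalize (((T lam).filter fun p => p.2 = 0).map Prod.fst).prod = D'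
  intro key nK nQ nL nM
  by_cases hD : D' = 0
  · have hD2 : D = 0 := by
      rw [hD, zero_mul, zero_mul] at key
      rcases mul_eq_zero.1 key with h | h
      · exact (mul_eq_zero.1 h).resolve_right nK
      · exact absurd h nL
    rw [hD, hD2]
    simp
  · have hD2 : D ≠ 0 := by
      rintro rfl
      rw [zero_mul, zero_mul] at key
      exact mul_ne_zero (mul_ne_zero hD nM) nQ key.symm
    field_simp
    linear_combination (conb ε₁ ε₂t aT b - mp ω) * (conb ε₁ ε₂t aT b - mm ω) * (∏ b ∈ bx lam, (conb ε₁ ε₂t aT b - mp (colb b)) * (mm (colb b) - conb ε₁ ε₂t aT b)) * key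

lemma term_Y (ε₁ ε₂t : ℂ) (aT : ZMod N → ℂ)
    (hgen : ∀ ω' ω'' : ZMod N, ∀ i j : ℤ,
      aT ω' - aT ω'' + (i : ℂ) * ε₁ + (j : ℂ) * ε₂t = 0 → ω' = ω'' ∧ i = 0 ∧ j = 0)
    (ω : ZMod N) (lam : ZMod N → YoungDiagram) :
    ∃ q : Polynomial ℂ, Ycol N ε₁ ε₂t aT (ω + 1) (ε₁ + ε₂t) lam =
      algebraMap (Polynomial ℂ) (RatFunc ℂ) q +
      ∑ b ∈ (rb lam).filter (fun b => colb b = ω), RatFunc.C (resY ε₁ ε₂t aT ω lam b) /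
          (RatFunc.X - RatFunc.C (conb ε₁ ε₂t aT b)) := by
  obtain ⟨q, hq⟩ := partial_frac ((rb lam).filter (fun b => colb b = ω)) (conb ε₁ ε₂t aT)
    (conb_inj hgen) (∏ b ∈ (ab lam).filter (fun b => colb b = ω + 1),
      (Polynomial.X + Polynomial.C (ε₁ + ε₂t) - Polynomial.C (conb ε₁ ε₂t aT b)))
  refine ⟨q, ?_⟩
  rw [Ycol_eq]
  simp only [map_prod, map_add, map_sub, RatFunc.algebraMap_X, RatFunc.algebraMap_C,
    Polynomial.eval_prod, Polynomial.eval_add, Polynomial.eval_sub, Polynomial.eval_X,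
    Polynomial.eval_C] at hq
  simp only [add_left_inj, map_add, add_sub_add_right_eq_sub]
  rw [hq]
  simp only [resY]

lemma term_I (ε₁ ε₂t : ℂ) (aT mp mm : ZMod N → ℂ)
    (hgen : ∀ ω' ω'' : ZMod N, ∀ i j : ℤ,
      aT ω' - aT ω'' + (i : ℂ) * ε₁ + (j : ℂ) * ε₂t = 0 → ω' = ω'' ∧ i = 0 ∧ j = 0)
    (ω : ZMod N) (lam : ZMod N → YoungDiagram) :
    ∃ q : Polynomial ℂ, (RatFunc.X - RatFunc.C (mp ω)) * (RatFunc.X - RatFunc.C (mm ω)) /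
        Ycol N ε₁ ε₂t aT ω 0 lam =
      algebraMap (Polynomial ℂ) (RatFunc ℂ) q +
      ∑ b ∈ (ab lam).filter (fun b => colb b = ω),
          RatFunc.C ((conb ε₁ ε₂t aT b - mp ω) * (conb ε₁ ε₂t aT b - mm ω) *
            resI ε₁ ε₂t aT ω lam b) /
          (RatFunc.X - RatFunc.C (conb ε₁ ε₂t aT b)) := by
  obtain ⟨q, hq⟩ := partial_frac ((ab lam).filter (fun b => colb b = ω)) (conb ε₁ ε₂t aT)
    (conb_inj hgen) ((Polynomial.X - Polynomial.C (mp ω)) * (Polynomial.X - Polynomial.C (mm ω)) *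
      ∏ b ∈ (rb lam).filter (fun b => colb b + 1 = ω),
      (Polynomial.X - Polynomial.C (conb ε₁ ε₂t aT b + (ε₁ + ε₂t))))
  refine ⟨q, ?_⟩
  rw [Ycol_eq]
  simp only [map_prod, map_mul, map_sub, RatFunc.algebraMap_X, RatFunc.algebraMap_C,
    Polynomial.eval_prod, Polynomial.eval_mul, Polynomial.eval_sub, Polynomial.eval_X,
    Polynomial.eval_C] at hq
  simp only [map_zero, add_zero]
  rw [div_div_eq_mul_div, hq]
  simp only [resI, mul_div_assoc, map_mul, map_sub]

end QQ

/-- Regularity of the averaged fractional qq-character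
`𝒳_ω(x) = Y_{ω+1}(x+ε̃) + 𝔮_ω·P_ω(x)/Y_ω(x)`: for every color `ω` and every profile
`k̄` of instanton charges (i.e. coefficientwise in the fractional couplings), the
average against the orbifold pseudo-measure has no poles in `x`. -/
theorem colored_qq_character_regular (N : ℕ) [NeZero N]
    (ε₁ ε₂t : ℂ) (aT mp mm : ZMod N → ℂ)
    (hgen : ∀ ω' ω'' : ZMod N, ∀ i j : ℤ,
      aT ω' - aT ω'' + (i : ℂ) * ε₁ + (j : ℂ) * ε₂t = 0 → ω' = ω'' ∧ i = 0 ∧ j = 0)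
    (T : (ZMod N → YoungDiagram) → Multiset (ℂ × ZMod N))
    (hT : ∀ lam : ZMod N → YoungDiagram,
      ((T lam).map fun w => AddMonoidAlgebra.single w (1 : ℤ)).sum =
        colChar N ε₁ ε₂t aT lam)
    (ω : ZMod N) (kb : ZMod N → ℕ) :
    ∃ p : Polynomial ℂ,
      (∑ᶠ lam ∈ {lam : ZMod N → YoungDiagram | ∀ σ : ZMod N, kcharge N lam σ = kb σ},
          RatFunc.C (muOrb N ε₁ ε₂t aT mp mm T lam) *
            Ycol N ε₁ ε₂t aT (ω + 1) (ε₁ + ε₂t) lam) +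
        (∑ᶠ lam ∈ {lam : ZMod N → YoungDiagram |
            ∀ σ : ZMod N, kcharge N lam σ + (if σ = ω then 1 else 0) = kb σ},
          RatFunc.C (muOrb N ε₁ ε₂t aT mp mm T lam) *
            ((RatFunc.X - RatFunc.C (mp ω)) * (RatFunc.X - RatFunc.C (mm ω)) /
              Ycol N ε₁ ε₂t aT ω 0 lam)) =
      algebraMap (Polynomial ℂ) (RatFunc ℂ) p := by
  classical
  have h1 := fun lam => term_Y ε₁ ε₂t aT hgen ω lam
  have h2 := fun lam => term_I ε₁ ε₂t aT mp mm hgen ω lam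
  choose q1 hq1 using h1
  choose q2 hq2 using h2
  have fin1 := finite_charge kb
  have fin2 : {lam : ZMod N → YoungDiagram |
      ∀ σ : ZMod N, kcharge N lam σ + (if σ = ω then 1 else 0) = kb σ}.Finite := by
    refine (finite_charge (fun σ => kb σ - if σ = ω then 1 else 0)).subset ?_
    intro lam hl σ
    have := hl σ
    show _ = kb σ - _
    omega
  rw [finsum_mem_eq_finite_toFinset_sum _ fin1, finsum_mem_eq_finite_toFinset_sum _ fin2]
  refine ⟨(∑ lam ∈ fin1.toFinset, Polynomial.C (muOrb N ε₁ ε₂t aT mp mm T lam) * q1 lam) +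
    ∑ lam ∈ fin2.toFinset, Polynomial.C (muOrb N ε₁ ε₂t aT mp mm T lam) * q2 lam, ?_⟩
  simp only [hq1, hq2, mul_add, Finset.sum_add_distrib, map_add, map_sum, map_mul,
    RatFunc.algebraMap_C]
  have cancel : (∑ lam ∈ fin1.toFinset, RatFunc.C (muOrb N ε₁ ε₂t aT mp mm T lam) *
        ∑ b ∈ (rb lam).filter (fun b => colb b = ω), RatFunc.C (resY ε₁ ε₂t aT ω lam b) /
          (RatFunc.X - RatFunc.C (conb ε₁ ε₂t aT b))) +
      (∑ lam ∈ fin2.toFinset, RatFunc.C (muOrb N ε₁ ε₂t aT mp mm T lam) *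
        ∑ b ∈ (ab lam).filter (fun b => colb b = ω),
          RatFunc.C ((conb ε₁ ε₂t aT b - mp ω) * (conb ε₁ ε₂t aT b - mm ω) *
            resI ε₁ ε₂t aT ω lam b) /
          (RatFunc.X - RatFunc.C (conb ε₁ ε₂t aT b))) = 0 := by
    simp only [Finset.mul_sum]
    rw [Finset.sum_sigma', Finset.sum_sigma', add_eq_zero_iff_eq_neg, ← Finset.sum_neg_distrib]
    refine Finset.sum_bij' (fun p _ => ⟨remB p.1 p.2, p.2⟩) (fun p _ => ⟨addB p.1 p.2, p.2⟩)
      ?_ ?_ ?_ ?_ ?_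
    · rintro ⟨lam, b⟩ hp
      simp only [Finset.mem_sigma, Set.Finite.mem_toFinset, Set.mem_ofPred_eq,
        Finset.mem_filter] at hp ⊢
      obtain ⟨hk, hb, hc⟩ := hp
      have ha := mem_ab_remB hb
      refine ⟨fun σ => ?_, ha, hc⟩
      rw [← hk σ, ← hc, ← kcharge_addB ha, addB_remB hb]
    · rintro ⟨lam, b⟩ hp
      simp only [Finset.mem_sigma, Set.Finite.mem_toFinset, Set.mem_ofPred_eq,
        Finset.mem_filter] at hp ⊢
      obtain ⟨hk, hb, hc⟩ := hp
      refine ⟨fun σ => ?_, mem_rb_addB hb, hc⟩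
      rw [kcharge_addB hb, hc, hk σ]
    · rintro ⟨lam, b⟩ hp
      simp only [Finset.mem_sigma, Finset.mem_filter] at hp
      simp only [addB_remB hp.2.1]
    · rintro ⟨lam, b⟩ hp
      simp only [Finset.mem_sigma, Finset.mem_filter] at hp
      simp only [remB_addB hp.2.1]
    · rintro ⟨lam, b⟩ hp
      simp only [Finset.mem_sigma, Finset.mem_filter] at hp
      have hr := residue_cancel ε₁ ε₂t aT mp mm hgen T hT (mem_ab_remB hp.2.1) hp.2.2
      rw [addB_remB hp.2.1] at hr
      have hr' := congrArg RatFunc.C hr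
      rw [map_add, map_zero, map_mul, map_mul (RatFunc.C) (muOrb N ε₁ ε₂t aT mp mm T _)] at hr'
      simp only
      rw [← mul_div_assoc, ← mul_div_assoc, ← neg_div]
      congr 1
      linear_combination hr'
  simp only [map_mul] at cancel
  linear_combination cancel
end
end

section
/- In the regular ℤ/N-colored setup with generic parameters, fix an N-tuple λ̄ of Young diagrams and ω ∈ ℤ/N, and write k_ω = k_ω(λ̄). Set A_ω = ã_ω/ε₁, κ̃ = ε̃₂/ε₁, d_ω = k_{ω−1} − k_ω − A_ω, and c_ω = (ε₁/2)·k_ω + Σ (ã_{ω′} + c̃(i,j)), the sum running over all boxes (i,j) ∈ λ^{(ω′)} of color ω. Then the colored Y-observable Y_ω(x)|_{λ̄} ∈ ℂ(x) has large-x expansion with leading term x, next coefficient ε₁·d_ω, and x^{−1}-coefficient ε₁²·[ (d_ω² − A_ω²)/2 + κ̃·k_{ω−1} + (c_{ω−1} − c_ω)/ε₁ ]; precisely, lim_{x→∞}(Y_ω(x)|_{λ̄} − x) = ε₁·d_ω and lim_{x→∞} x·(Y_ω(x)|_{λ̄} − x − ε₁·d_ω) = ε₁²·( (d_ω² − A_ω²)/2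 + κ̃·k_{ω−1} + (c_{ω−1} − c_ω)/ε₁ ). -/
open scoped BigOperators

noncomputable section

/-- The observable `c_ω = (ε₁/2)·k_ω + Σ_{boxes of color ω} (ã_{ω′} + c̃(i,j))`. -/
def cobs (N : ℕ) [NeZero N] (ε₁ ε₂t : ℂ) (aT : ZMod N → ℂ)
    (lam : ZMod N → YoungDiagram) (ω : ZMod N) : ℂ :=
  ε₁ / 2 * (kcharge N lam ω : ℂ) +
    ∑ ω' : ZMod N,
      ∑ c ∈ (lam ω').cells.filter fun c => ω' + (c.2 : ZMod N) = ω,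
        (aT ω' + ctil ε₁ ε₂t c)

/-- The observable `d_ω = k_{ω−1} − k_ω − A_ω` with `A_ω = ã_ω/ε₁`. -/
def dobs (N : ℕ) [NeZero N] (ε₁ : ℂ) (aT : ZMod N → ℂ)
    (lam : ZMod N → YoungDiagram) (ω : ZMod N) : ℂ :=
  (kcharge N lam (ω - 1) : ℂ) - (kcharge N lam ω : ℂ) - aT ω / ε₁

open Filter in
/-- `f x = exp (p / x + q / x ^ 2) + o(x ^ (-2))` at infinity. -/
def LogExp (f : ℂ → ℂ) (p q : ℂ) : Prop :=
  ∃ r : ℂ → ℂ, Tendsto r (cocompact ℂ) (nhds 0) ∧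
    ∀ᶠ x in cocompact ℂ, f x = 1 + p / x + (p ^ 2 / 2 + q + r x) / x ^ 2

open Filter in
lemma ev_ne (a : ℂ) : ∀ᶠ x in cocompact ℂ, x ≠ a := by
  have := (Set.finite_singleton a).isCompact.compl_mem_cocompact
  filter_upwards [this] with x hx
  simpa using hx

open Filter in
lemma ev_poly_ne (P : Polynomial ℂ) (hP : P ≠ 0) :
    ∀ᶠ x in cocompact ℂ, Polynomial.eval₂ (RingHom.id ℂ) x P ≠ 0 := by
  have := (P.roots.toFinset.finite_toSet).isCompact.compl_mem_cocompact
  filter_upwards [this] with x hx h0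
  apply hx
  simp only [Finset.mem_coe, Multiset.mem_toFinset]
  rw [Polynomial.mem_roots hP]
  exact h0

open Filter in
lemma inv_sub_tendsto (a : ℂ) :
    Tendsto (fun x : ℂ => (x - a)⁻¹) (cocompact ℂ) (nhds 0) := by
  have h1 : Tendsto (fun x : ℂ => x - a) (cocompact ℂ) (cocompact ℂ) := by
    simpa [sub_eq_add_neg] using (Homeomorph.addRight (-a)).isClosedEmbedding.tendsto_cocompact
  exact (tendsto_inv₀_cobounded.mono_left (by rw [Metric.cobounded_eq_cocompact])).comp h1

lemma LogExp.one : LogExp (fun _ => 1) 0 0 :=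
  ⟨fun _ => 0, tendsto_const_nhds, by simp⟩

open Filter in
lemma LogExp.congr {f g : ℂ → ℂ} {p q : ℂ} (hf : LogExp f p q)
    (h : ∀ᶠ x in cocompact ℂ, g x = f x) : LogExp g p q := by
  obtain ⟨r, hr, h'⟩ := hf
  refine ⟨r, hr, ?_⟩
  filter_upwards [h, h'] with x h1 h2
  rw [h1, h2]

open Filter in
lemma LogExp.mul {f g : ℂ → ℂ} {p q p' q' : ℂ} (hf : LogExp f p q) (hg : LogExp g p' q') :
    LogExp (fun x => f x * g x) (p + p') (q + q') := by
  obtain ⟨r, hr, h⟩ := hf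
  obtain ⟨r', hr', h'⟩ := hg
  have hi := inv_sub_tendsto 0
  simp only [sub_zero] at hi
  refine ⟨fun x => r x + r' x + (p * (p' ^ 2 / 2 + q' + r' x) + p' * (p ^ 2 / 2 + q + r x)) * x⁻¹
    + (p ^ 2 / 2 + q + r x) * (p' ^ 2 / 2 + q' + r' x) * (x⁻¹ * x⁻¹), ?_, ?_⟩
  · have h1 := (hr.const_add (p ^ 2 / 2 + q))
    have h2 := (hr'.const_add (p' ^ 2 / 2 + q'))
    have := ((hr.add hr').add (((h2.const_mul p).add (h1.const_mul p')).mul hi)).add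
      ((h1.mul h2).mul (hi.mul hi))
    simpa using this
  · filter_upwards [h, h', ev_ne 0] with x h1 h2 h3
    rw [h1, h2]
    field_simp
    ring

open Filter in
lemma LogExp.frac (a b : ℂ) :
    LogExp (fun x => (x - b) / (x - a)) (a - b) ((a ^ 2 - b ^ 2) / 2) := by
  refine ⟨fun x => (a - b) * a * a * (x - a)⁻¹, ?_, ?_⟩
  · simpa using (inv_sub_tendsto a).const_mul ((a - b) * a * a)
  · filter_upwards [ev_ne 0, ev_ne a] with x h1 h2
    have : x - a ≠ 0 := sub_ne_zero.2 h2
    field_simp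
    ring

/-- evaluation of a rational function -/
abbrev rev (x : ℂ) (f : RatFunc ℂ) : ℂ := RatFunc.eval (RingHom.id ℂ) x f

open Filter in
lemma ev_eval_mul (f g : RatFunc ℂ) : ∀ᶠ x in cocompact ℂ, rev x (f * g) = rev x f * rev x g := by
  filter_upwards [ev_poly_ne _ f.denom_ne_zero, ev_poly_ne _ g.denom_ne_zero] with x h1 h2
  exact RatFunc.eval_mul _ _ h1 h2

lemma rev_lin (x a : ℂ) : rev x (RatFunc.X + RatFunc.C 0 - RatFunc.C a) = x - a := by
  have : (RatFunc.X + RatFunc.C 0 - RatFunc.C a : RatFunc ℂ)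
      = algebraMap (Polynomial ℂ) (RatFunc ℂ) (Polynomial.X - Polynomial.C a) := by
    simp
  rw [this, rev, RatFunc.eval_algebraMap]
  simp

open Filter in
lemma ev_eval_frac (a b : ℂ) : ∀ᶠ x in cocompact ℂ,
    rev x ((RatFunc.X + RatFunc.C 0 - RatFunc.C b) / (RatFunc.X + RatFunc.C 0 - RatFunc.C a))
      = (x - b) / (x - a) := by
  have hne : (RatFunc.X + RatFunc.C 0 - RatFunc.C a : RatFunc ℂ) ≠ 0 := by
    intro h
    have := rev_lin (a + 1) a
    rw [h] at this
    simp [rev] at this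
  filter_upwards [ev_eval_mul ((RatFunc.X + RatFunc.C 0 - RatFunc.C b) /
    (RatFunc.X + RatFunc.C 0 - RatFunc.C a)) (RatFunc.X + RatFunc.C 0 - RatFunc.C a),
    ev_ne a] with x h1 h2
  rw [div_mul_cancel₀ _ hne, rev_lin, rev_lin] at h1
  rw [h1, mul_div_cancel_right₀ _ (sub_ne_zero.2 h2)]

lemma LogExp.prod {ι : Type*} (s : Finset ι) (F : ι → RatFunc ℂ) (p q : ι → ℂ)
    (h : ∀ i ∈ s, LogExp (fun x => rev x (F i)) (p i) (q i)) :
    LogExp (fun x => rev x (∏ i ∈ s, F i)) (∑ i ∈ s, p i) (∑ i ∈ s, q i) := by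
  classical
  induction s using Finset.induction_on with
  | empty => simpa [rev] using LogExp.one
  | insert i s hi ih =>
    rw [Finset.prod_insert hi, Finset.sum_insert hi, Finset.sum_insert hi]
    exact ((h i (by simp)).mul (ih fun j hj => h j (by simp [hj]))).congr (ev_eval_mul _ _)

lemma LogExp.ite (P : Prop) [Decidable P] (F : RatFunc ℂ) (p q : ℂ)
    (h : LogExp (fun x => rev x F) p q) :
    LogExp (fun x => rev x (if P then F else 1)) (if P then p else 0) (if P then q else 0) := by
  split_ifs
  · exact h
  · simpa [rev] using LogExp.one

open Filter in
lemma LogExp.final {f Y : ℂ → ℂ} {p q : ℂ} (hf : LogExp f p q)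
    (h : ∀ᶠ x in cocompact ℂ, Y x = x * f x) :
    Tendsto (fun x => Y x - x) (cocompact ℂ) (nhds p) ∧
    Tendsto (fun x => x * (Y x - x - p)) (cocompact ℂ) (nhds (p ^ 2 / 2 + q)) := by
  obtain ⟨r, hr, h'⟩ := hf
  have h1 := (hr.const_add (p ^ 2 / 2 + q))
  have hi := inv_sub_tendsto 0
  simp only [sub_zero] at hi
  constructor
  · have h2 := (h1.mul hi).const_add p
    simp only [mul_zero, add_zero] at h2
    refine h2.congr' ?_
    filter_upwards [h, h', ev_ne 0] with x e1 e2 e3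
    rw [e1, e2]
    field_simp
    ring
  · simp only [add_zero] at h1
    refine h1.congr' ?_
    filter_upwards [h, h', ev_ne 0] with x e1 e2 e3
    rw [e1, e2]
    field_simp
    ring

/-- Large-`x` expansion of the colored Y-observable: `Y_ω(x)|_λ̄` has leading term `x`,
next coefficient `ε₁·d_ω`, and `x^{−1}`-coefficient
`ε₁²·[(d_ω² − A_ω²)/2 + κ̃·k_{ω−1} + (c_{ω−1} − c_ω)/ε₁]`. -/
theorem Ycol_large_x_expansion (N : ℕ) [NeZero N]
    (ε₁ ε₂t : ℂ) (aT : ZMod N → ℂ)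
    (hgen : ∀ ω' ω'' : ZMod N, ∀ i j : ℤ,
      aT ω' - aT ω'' + (i : ℂ) * ε₁ + (j : ℂ) * ε₂t = 0 → ω' = ω'' ∧ i = 0 ∧ j = 0)
    (lam : ZMod N → YoungDiagram) (ω : ZMod N) :
    Filter.Tendsto
      (fun x : ℂ => RatFunc.eval (RingHom.id ℂ) x (Ycol N ε₁ ε₂t aT ω 0 lam) - x)
      (Filter.cocompact ℂ) (nhds (ε₁ * dobs N ε₁ aT lam ω)) ∧
    Filter.Tendsto
      (fun x : ℂ => x *
        (RatFunc.eval (RingHom.id ℂ) x (Ycol N ε₁ ε₂t aT ω 0 lam) - x -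
          ε₁ * dobs N ε₁ aT lam ω))
      (Filter.cocompact ℂ)
      (nhds (ε₁ ^ 2 *
        ((dobs N ε₁ aT lam ω ^ 2 - (aT ω / ε₁) ^ 2) / 2 +
          (ε₂t / ε₁) * (kcharge N lam (ω - 1) : ℂ) +
          (cobs N ε₁ ε₂t aT lam (ω - 1) - cobs N ε₁ ε₂t aT lam ω) / ε₁))) := by
  have hε : ε₁ ≠ 0 := by
    intro h0
    have := (hgen 0 0 1 0 (by simp [h0])).2.1
    exact one_ne_zero this
  have key := LogExp.prod Finset.univ _ _ _ fun ω' _ =>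
    LogExp.prod (lam ω').cells _ _ _ fun c _ =>
      ((LogExp.ite (ω' + (c.2 : ZMod N) = ω) _ _ _
        ((LogExp.frac (aT ω' + ctil ε₁ ε₂t c) (aT ω' + ctil ε₁ ε₂t c + ε₁)).congr
          (ev_eval_frac _ _))).mul
      (LogExp.ite (ω' + (c.2 : ZMod N) = ω - 1) _ _ _
        ((LogExp.frac (aT ω' + ctil ε₁ ε₂t c + ε₁ + ε₂t) (aT ω' + ctil ε₁ ε₂t c + ε₂t)).congr
          (ev_eval_frac _ _)))).congr (ev_eval_mul _ _)
  have key2 := ((LogExp.frac 0 (aT ω)).mul key).final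
    (Y := fun x => rev x (Ycol N ε₁ ε₂t aT ω 0 lam)) (by
      filter_upwards [ev_eval_mul _ _, ev_ne 0] with x h1 h2
      rw [Ycol, h1, rev_lin, sub_zero, ← mul_assoc, mul_div_cancel₀ _ h2])
  have hk : ∀ w, (kcharge N lam w : ℂ) = ∑ ω' : ZMod N, ∑ c ∈ (lam ω').cells,
      if ω' + (c.2 : ZMod N) = w then (1 : ℂ) else 0 := by
    intro w
    simp [kcharge]
  have hc : ∀ w, cobs N ε₁ ε₂t aT lam w = ∑ ω' : ZMod N, ∑ c ∈ (lam ω').cells,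
      if ω' + (c.2 : ZMod N) = w then (ε₁ / 2 + (aT ω' + ctil ε₁ ε₂t c)) else 0 := by
    intro w
    rw [cobs, hk, Finset.mul_sum, ← Finset.sum_add_distrib]
    refine Finset.sum_congr rfl fun ω' _ => ?_
    rw [Finset.mul_sum, Finset.sum_filter, ← Finset.sum_add_distrib]
    refine Finset.sum_congr rfl fun c _ => ?_
    split_ifs <;> simp
  have e1 : ε₁ * dobs N ε₁ aT lam ω = 0 - aT ω + ∑ ω' : ZMod N, ∑ c ∈ (lam ω').cells,
      ((if ω' + (c.2 : ZMod N) = ω then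
          aT ω' + ctil ε₁ ε₂t c - (aT ω' + ctil ε₁ ε₂t c + ε₁) else 0) +
        (if ω' + (c.2 : ZMod N) = ω - 1 then
          aT ω' + ctil ε₁ ε₂t c + ε₁ + ε₂t - (aT ω' + ctil ε₁ ε₂t c + ε₂t) else 0)) := by
    have : ε₁ * dobs N ε₁ aT lam ω = 0 - aT ω +
        (ε₁ * (kcharge N lam (ω - 1) : ℂ) - ε₁ * (kcharge N lam ω : ℂ)) := by
      rw [dobs]; field_simp; ring
    rw [this, hk, hk]
    simp only [Finset.mul_sum, ← Finset.sum_sub_distrib]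
    congr 1
    refine Finset.sum_congr rfl fun ω' _ => Finset.sum_congr rfl fun c _ => ?_
    split_ifs <;> ring
  have e2 : ε₁ * ε₂t * (kcharge N lam (ω - 1) : ℂ) +
      ε₁ * (cobs N ε₁ ε₂t aT lam (ω - 1) - cobs N ε₁ ε₂t aT lam ω) =
      ∑ ω' : ZMod N, ∑ c ∈ (lam ω').cells,
      ((if ω' + (c.2 : ZMod N) = ω then
          ((aT ω' + ctil ε₁ ε₂t c) ^ 2 - (aT ω' + ctil ε₁ ε₂t c + ε₁) ^ 2) / 2 else 0) +
        (if ω' + (c.2 : ZMod N) = ω - 1 then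
          ((aT ω' + ctil ε₁ ε₂t c + ε₁ + ε₂t) ^ 2 - (aT ω' + ctil ε₁ ε₂t c + ε₂t) ^ 2) / 2
          else 0)) := by
    rw [hk, hc, hc]
    simp only [Finset.mul_sum, ← Finset.sum_sub_distrib, ← Finset.sum_add_distrib]
    refine Finset.sum_congr rfl fun ω' _ => Finset.sum_congr rfl fun c _ => ?_
    split_ifs <;> ring
  rw [← e1, ← e2] at key2
  refine ⟨key2.1, ?_⟩
  convert key2.2 using 2
  field_simp
  ring
end
end

section
/- Let N ≥ 1 and let q: ℤ/N → R be a family of elements of a commutative ring R. Define U_ω = 1 + q_{ω+1} + q_{ω+1}q_{ω+2} + … + q_{ω+1}q_{ω+2}⋯q_{ω+N−1} (i.e., U_ω = Σ_{l=0}^{N−1} ∏_{m=1}^{l} q_{ω+m}) and q = ∏_{ω∈ℤ/N} q_ω. Then for every ω ∈ ℤ/N: (1 + q_ω)·U_ω − U_{ω−1} − q_{ω+1}·U_{ω+1} = 0, and U_ω − q_{ω+1}·U_{ω+1} = 1 − q. -/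
open scoped BigOperators

/-- `U_ω = 1 + q_{ω+1} + q_{ω+1}q_{ω+2} + … + q_{ω+1}⋯q_{ω+N−1}`, indices mod `N`. -/
def Ufam {R : Type*} [CommRing R] (N : ℕ) (q : ZMod N → R) (ω : ZMod N) : R :=
  ∑ l ∈ Finset.range N, ∏ m ∈ Finset.range l, q (ω + ((m + 1 : ℕ) : ZMod N))

theorem Ufam_full_prod {R : Type*} [CommRing R] (N : ℕ) [NeZero N]
    (q : ZMod N → R) (ω : ZMod N) :
    ∏ m ∈ Finset.range N, q (ω + ((m + 1 : ℕ) : ZMod N)) = ∏ σ : ZMod N, q σ := by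
  refine Finset.prod_bij' (fun m _ => ω + ((m + 1 : ℕ) : ZMod N))
    (fun σ _ => (σ - ω - 1).val) ?_ ?_ ?_ ?_ ?_
  · intro a _
    exact Finset.mem_univ _
  · intro a _
    exact Finset.mem_range.2 (ZMod.val_lt _)
  · intro a ha
    have h : ω + ((a + 1 : ℕ) : ZMod N) - ω - 1 = (a : ZMod N) := by
      push_cast
      ring
    simp only [h]
    exact ZMod.val_cast_of_lt (Finset.mem_range.1 ha)
  · intro a _
    simp
  · intro a _
    rfl

theorem Ufam_step {R : Type*} [CommRing R] (N : ℕ) [NeZero N]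
    (q : ZMod N → R) (ω : ZMod N) :
    Ufam N q ω - q (ω + 1) * Ufam N q (ω + 1) = 1 - ∏ σ : ZMod N, q σ := by
  have h : q (ω + 1) * Ufam N q (ω + 1) = ∑ l ∈ Finset.range N,
      ∏ m ∈ Finset.range (l + 1), q (ω + ((m + 1 : ℕ) : ZMod N)) := by
    rw [Ufam, Finset.mul_sum]
    refine Finset.sum_congr rfl fun l _ => ?_
    rw [Finset.prod_range_succ', mul_comm]
    congr 1
    · refine Finset.prod_congr rfl fun m _ => ?_
      congr 1
      push_cast
      ring
    · simp
  rw [h, Ufam, ← Finset.sum_sub_distrib, Finset.sum_range_sub', Ufam_full_prod]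
  simp

/-- The family `U_ω` solves the cyclic linear system
`(1 + q_ω)·U_ω − U_{ω−1} − q_{ω+1}·U_{ω+1} = 0`, and moreover
`U_ω − q_{ω+1}·U_{ω+1} = 1 − q` with `q = ∏_ω q_ω`. -/
theorem Ufam_solves_system {R : Type*} [CommRing R] (N : ℕ) [NeZero N]
    (q : ZMod N → R) (ω : ZMod N) :
    (1 + q ω) * Ufam N q ω - Ufam N q (ω - 1) - q (ω + 1) * Ufam N q (ω + 1) = 0 ∧
    Ufam N q ω - q (ω + 1) * Ufam N q (ω + 1) = 1 - ∏ σ : ZMod N, q σ := by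
  have h1 := Ufam_step N q ω
  have h2 := Ufam_step N q (ω - 1)
  rw [sub_add_cancel] at h2
  exact ⟨by linear_combination h1 - h2, h1⟩
end
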